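/- arXiv:2507.09433 — 10 statements merged into one kernel-verified Lean document; each statement's English description precedes it below -/
import Mathlib

section
/- For every integer k ≥ 1 there exists a constant ε > 0 such that for all integers n ≥ k+1, the number of distinct values attained by the permanent on the set of (k+1)×n matrices with entries ±1 is at least ε·n^(k−2); that is, r_{k+1,n} ≥ ε·n^(k−2). -/
/-- The permanent of a rectangular `k × n` real matrix:
`per(A) = Σ_σ Π_i A_{i, σ(i)}`, the sum ranging over injections `σ : Fin k ↪ Fin n`. -/
noncomputable def rperm {k n : ℕ} (A : Matrix (Fin k) (Fin n) ℝ) : ℝ :=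
  ∑ σ : Fin k ↪ Fin n, ∏ i, A i (σ i)

/-- `permCount k n = r_{k,n}`: the number of distinct values attained by the permanent
on the set `Ω_{k,n}` of `k × n` matrices with `±1` entries. -/
noncomputable def permCount (k n : ℕ) : ℕ :=
  {x : ℝ | ∃ A : Matrix (Fin k) (Fin n) ℝ,
      (∀ i j, A i j = 1 ∨ A i j = -1) ∧ rperm A = x}.ncard

/-!
Adjoining a row `x` to a `k`-row matrix `B` gives, by inclusion-exclusion on the column used by `x`,
`per (x; B) = ∑ S, (-1) ^ |S| * |S|! * per (B without the rows in S) * ∑ j, x j * ∏ i ∈ S, B i j`,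
so for fixed `B` the permanent is linear in the moments of `x` against the products of rows of `B`.
Fix sets `S₀, …, S_k` of rows with `|S_t| = t`. Let `B` consist of `k + 1` blocks, each holding `N`
copies of every sign vector, and of all-ones columns elsewhere. If in block `t` the row `x` is
`± ∏ i ∈ S_t, B i j`, with the positive sign on `w_t` of the `N` copies, then by orthogonality of
the Walsh functions only the moment of `S_t` sees block `t`, and it is affine in `w_t`. The
permanent is thus affine in the digits `0 ≤ w_t ≤ N`. Most columns of `B` are constant, so the
coefficient of `w_t` has order exactly `n ^ (k - t)`. For `N` a small multiple of `n` each
coefficient beats all the later ones together, as in a mixed-radix expansion, and the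
`(N + 1) ^ (k + 1)` choices of digits give distinct permanents.
-/

open Finset
open scoped Nat

section RectPerm

variable {α α' β β' R : Type*} [Fintype α] [Fintype α'] [Fintype β] [Fintype β'] [CommRing R]

/-- The permanent of a rectangular matrix with arbitrary finite index types, which extends `rperm`
so that rows can be adjoined and deleted without renumbering. -/
noncomputable def rectPerm (A : Matrix α β R) : R :=
  ∑ σ : α ↪ β, ∏ i, A i (σ i)

/-- The matrix `A` with `x` adjoined as an extra row, indexed by `none`. -/
def addRow {α β R : Type*} (x : β → R) (A : Matrix α β R) : Matrix (Option α) β R :=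
  fun i => i.elim x A

/-- The submatrix of `A` formed by the rows in `U`. -/
def keepRows {α β R : Type*} (A : Matrix α β R) (U : Finset α) : Matrix U β R :=
  A.submatrix (↑) id

theorem rectPerm_submatrix_equiv (A : Matrix α β R) (e : α' ≃ α) (f : β' ≃ β) :
    rectPerm (A.submatrix e f) = rectPerm A := by
  refine Fintype.sum_equiv (e.embeddingCongr f) _ _ fun σ => ?_
  refine Fintype.prod_equiv e _ _ fun i => ?_
  simp [Equiv.embeddingCongr]

theorem rectPerm_updateRow_mul [DecidableEq α] (A : Matrix α β R) (x : β → R) (i : α) :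
    rectPerm (A.updateRow i (x * A i)) = ∑ σ : α ↪ β, x (σ i) * ∏ i', A i' (σ i') := by
  refine Fintype.sum_congr _ _ fun σ => ?_
  have split_row (i' : α) : A.updateRow i (x * A i) i' (σ i') =
      (if i' = i then x (σ i') else 1) * A i' (σ i') := by
    by_cases h : i' = i
    · subst h; simp
    · simp [h]
  simp only [split_row, prod_mul_distrib, prod_ite_eq', mem_univ, if_true]

/-- A new entry avoids the columns already taken, so the collisions with each row are removed from
the free sum over all columns. -/
theorem rectPerm_addRow_eq_sub [DecidableEq α] (x : β → R) (A : Matrix α β R) :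
    rectPerm (addRow x A) =
      (∑ j, x j) * rectPerm A - ∑ i, rectPerm (A.updateRow i (x * A i)) := by
  classical
  have sum_avoiding (σ : α ↪ β) :
      ∑ j : ↥(Set.range σ)ᶜ, x j = ∑ j, x j - ∑ i, x (σ i) := by
    rw [eq_sub_iff_add_eq', ← sum_map univ σ x, ← sum_add_sum_compl (univ.map σ) x]
    congr 1
    exact (sum_subtype _ (by simp) x).symm
  calc rectPerm (addRow x A)
      = ∑ σ : α ↪ β, ∑ j : ↥(Set.range σ)ᶜ, x j * ∏ i, A i (σ i) := by
        rw [rectPerm, ← (Function.Embedding.optionEmbeddingEquiv α β).symm.sum_comp,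
          Fintype.sum_sigma]
        simp only [Fintype.prod_option]
        rfl
    _ = ∑ σ : α ↪ β, (∑ j, x j - ∑ i, x (σ i)) * ∏ i, A i (σ i) := by
        simp only [← sum_mul, sum_avoiding]
    _ = (∑ j, x j) * rectPerm A - ∑ i, rectPerm (A.updateRow i (x * A i)) := by
        simp only [rectPerm_updateRow_mul, sub_mul, sum_sub_distrib, ← mul_sum]
        rw [sum_comm]
        simp only [sum_mul, rectPerm]

theorem rectPerm_updateRow_keepRows {α : Type*} [DecidableEq α] (A : Matrix α β R) (y : β → R)
    {U : Finset α} (i : U) :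
    rectPerm ((keepRows A U).updateRow i y) = rectPerm (addRow y (keepRows A (U.erase i))) := by
  let g : Option (U.erase i) → U := fun o => o.elim i fun a => ⟨a, mem_of_mem_erase a.2⟩
  have hg : Function.Bijective g := by
    constructor
    · rintro (_ | a) (_ | b) h <;> grind
    · intro a
      by_cases h : a = i
      · exact ⟨none, h.symm⟩
      · exact ⟨some ⟨a, by grind⟩, rfl⟩
  rw [← rectPerm_submatrix_equiv _ (Equiv.ofBijective g hg) (Equiv.refl β)]
  congr 1
  ext (_ | a) j
  · exact congrFun (Matrix.updateRow_self (M := keepRows A U)) j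
  · have ha : g (some a) ≠ i := fun h => ne_of_mem_erase a.2 (congrArg Subtype.val h)
    exact congrFun (Matrix.updateRow_ne (M := keepRows A U) ha) j

theorem rectPerm_addRow_keepRows {α : Type*} [DecidableEq α] (x : β → R) (A : Matrix α β R)
    (U : Finset α) :
    rectPerm (addRow x (keepRows A U)) = (∑ j, x j) * rectPerm (keepRows A U) -
      ∑ i ∈ U, rectPerm (addRow (x * A i) (keepRows A (U.erase i))) := by
  rw [rectPerm_addRow_eq_sub, ← sum_coe_sort U]
  congr 1
  exact Fintype.sum_congr _ _ fun i => rectPerm_updateRow_keepRows A (x * A i) i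

theorem sum_powerset_erase_comm {α M : Type*} [DecidableEq α] [AddCommMonoid M] (U : Finset α)
    (f : α → Finset α → M) :
    ∑ i ∈ U, ∑ S ∈ (U.erase i).powerset, f i S = ∑ T ∈ U.powerset, ∑ i ∈ T, f i (T.erase i) := by
  rw [sum_sigma', sum_sigma']
  refine sum_bij' (fun p _ => ⟨insert p.1 p.2, p.1⟩) (fun q _ => ⟨q.2, q.1.erase q.2⟩)
    ?_ ?_ ?_ ?_ ?_ <;> rintro ⟨_, _⟩ h <;>
    simp only [mem_sigma, mem_powerset, subset_erase] at h ⊢ <;>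
    grind [erase_insert, insert_erase]

theorem sum_moment_erase {α : Type*} [DecidableEq α] (x : β → R) (A : Matrix α β R)
    {T : Finset α} (hT : T.Nonempty) :
    ∑ i ∈ T, (-1) ^ #(T.erase i) * (#(T.erase i))! *
        ∑ j, (x * A i) j * ∏ i' ∈ T.erase i, A i' j =
      -((-1) ^ #T * (#T)! * ∑ j, x j * ∏ i ∈ T, A i j) := by
  obtain ⟨m, hm⟩ : ∃ m, #T = m + 1 := Nat.exists_eq_add_one.2 hT.card_pos
  have term_eq (i : α) (hi : i ∈ T) : (-1) ^ #(T.erase i) * (#(T.erase i))! *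
        ∑ j, (x * A i) j * ∏ i' ∈ T.erase i, A i' j =
      (-1) ^ m * m ! * ∑ j, x j * ∏ i ∈ T, A i j := by
    have h_prod (j : β) : A i j * ∏ i' ∈ T.erase i, A i' j = ∏ i' ∈ T, A i' j :=
      mul_prod_erase T (A · j) hi
    simp only [card_erase_of_mem hi, hm, Pi.mul_apply, mul_assoc, h_prod, Nat.add_sub_cancel]
  rw [sum_congr rfl term_eq, sum_const, hm, Nat.factorial_succ]
  push_cast [nsmul_eq_mul]
  ring

theorem rectPerm_addRow_keepRows_eq_sum {α : Type*} [DecidableEq α] (x : β → R) (A : Matrix α β R)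
    (U : Finset α) :
    rectPerm (addRow x (keepRows A U)) = ∑ S ∈ U.powerset,
      (-1) ^ #S * (#S)! * (∑ j, x j * ∏ i ∈ S, A i j) * rectPerm (keepRows A (U \ S)) := by
  induction U using Finset.strongInduction generalizing x with | H U ih
  let F (i : α) (S : Finset α) : R :=
    (-1) ^ #S * (#S)! * (∑ j, (x * A i) j * ∏ i' ∈ S, A i' j) *
      rectPerm (keepRows A (U.erase i \ S))
  have sum_remove (T : Finset α) (hT : T.Nonempty) : ∑ i ∈ T, F i (T.erase i) =
      -((-1) ^ #T * (#T)! * (∑ j, x j * ∏ i ∈ T, A i j) * rectPerm (keepRows A (U \ T))) := by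
    rw [← neg_mul, ← sum_moment_erase x A hT, sum_mul]
    refine sum_congr rfl fun i hi => ?_
    have h_sdiff : U.erase i \ T.erase i = U \ T := by grind
    dsimp only [F]
    rw [h_sdiff]
  calc rectPerm (addRow x (keepRows A U))
      = (∑ j, x j) * rectPerm (keepRows A U) -
          ∑ T ∈ U.powerset, ∑ i ∈ T, F i (T.erase i) := by
        rw [rectPerm_addRow_keepRows, ← sum_powerset_erase_comm U F]
        congr 1
        exact sum_congr rfl fun i hi => ih _ (erase_ssubset hi) _
    _ = ∑ S ∈ U.powerset,
          (-1) ^ #S * (#S)! * (∑ j, x j * ∏ i ∈ S, A i j) * rectPerm (keepRows A (U \ S)) := by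
        rw [← add_sum_erase _ _ (empty_mem_powerset U), ← add_sum_erase _ _ (empty_mem_powerset U)]
        have h_nonempty (T) (hT : T ∈ U.powerset.erase ∅) : T.Nonempty :=
          nonempty_iff_ne_empty.2 (ne_of_mem_erase hT)
        rw [sum_congr rfl fun T hT => sum_remove T (h_nonempty T hT)]
        simp only [sum_neg_distrib, sum_empty, card_empty, pow_zero, Nat.factorial_zero,
          Nat.cast_one, one_mul, prod_empty, mul_one]
        rw [sdiff_empty]
        ring

/-- The coefficient with which the moment of a new row against `∏ i ∈ S, A i` enters the permanent
of the extended matrix. -/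
noncomputable def momentCoeff [DecidableEq α] (A : Matrix α β R) (S : Finset α) : R :=
  (-1) ^ #S * (#S)! * rectPerm (keepRows A Sᶜ)

theorem rectPerm_addRow_eq_sum [DecidableEq α] (x : β → R) (A : Matrix α β R) :
    rectPerm (addRow x A) = ∑ S, momentCoeff A S * ∑ j, x j * ∏ i ∈ S, A i j := by
  let e : Option ↥(univ : Finset α) ≃ Option α := (Equiv.subtypeUnivEquiv mem_univ).optionCongr
  have h : addRow x (keepRows A univ) = (addRow x A).submatrix e (Equiv.refl β) := by
    ext (_ | i) j <;> rfl
  rw [← rectPerm_submatrix_equiv _ e (Equiv.refl β), ← h, rectPerm_addRow_keepRows_eq_sum,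
    powerset_univ]
  exact Fintype.sum_congr _ _ fun S => mul_right_comm _ _ _

end RectPerm

section Bounds

variable {α β : Type*} [Fintype α] [Fintype β]

theorem abs_prod_apply_le_one {β : Type*} {A : Matrix α β ℝ} (hA : ∀ i j, |A i j| ≤ 1)
    (σ : α → β) : |∏ i, A i (σ i)| ≤ 1 := by
  rw [abs_prod]
  exact prod_le_one (fun _ _ => abs_nonneg _) fun _ _ => hA _ _

theorem abs_rectPerm_le_descFactorial {A : Matrix α β ℝ} (hA : ∀ i j, |A i j| ≤ 1) :
    |rectPerm A| ≤ (Fintype.card β).descFactorial (Fintype.card α) := by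
  calc |rectPerm A| ≤ ∑ σ : α ↪ β, |∏ i, A i (σ i)| := abs_sum_le_sum_abs _ _
    _ ≤ ∑ _σ : α ↪ β, 1 := by
        gcongr with σ
        exact abs_prod_apply_le_one hA σ
    _ = (Fintype.card β).descFactorial (Fintype.card α) := by
        rw [sum_const, card_univ, Fintype.card_embedding_eq, nsmul_one]

/-- Injections into the all-ones columns `P` contribute `1` each, the others at least `-1`. -/
theorem two_mul_descFactorial_sub_le_rectPerm {A : Matrix α β ℝ} (hA : ∀ i j, |A i j| ≤ 1)
    (P : Finset β) (hP : ∀ i, ∀ j ∈ P, A i j = 1) :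
    2 * ((#P).descFactorial (Fintype.card α) : ℝ) -
      (Fintype.card β).descFactorial (Fintype.card α) ≤ rectPerm A := by
  classical
  let good : Finset (α ↪ β) := {σ | ∀ i, σ i ∈ P}
  have card_good : (#P).descFactorial (Fintype.card α) ≤ #good := by
    rw [← Fintype.card_coe P, ← Fintype.card_embedding_eq, ← card_univ]
    refine card_le_card_of_injOn (fun σ => σ.trans (.subtype _)) (fun σ _ => by simp [good]) ?_
    intro σ _ σ' _ h
    ext i
    exact DFunLike.congr_fun h i
  have term_ge (σ : α ↪ β) : 2 * (if σ ∈ good then 1 else 0) - 1 ≤ ∏ i, A i (σ i) := by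
    split_ifs with h
    · rw [prod_eq_one fun i _ => hP i _ ((mem_filter.1 h).2 i)]
      norm_num
    · linarith [neg_abs_le (∏ i, A i (σ i)), abs_prod_apply_le_one hA σ]
  calc 2 * ((#P).descFactorial (Fintype.card α) : ℝ) -
        (Fintype.card β).descFactorial (Fintype.card α)
      ≤ 2 * #good - (Fintype.card β).descFactorial (Fintype.card α) := by gcongr
    _ = ∑ σ : α ↪ β, (2 * (if σ ∈ good then 1 else 0) - 1) := by
        simp [sum_sub_distrib, Fintype.card_embedding_eq, mul_comm]
    _ ≤ rectPerm A := sum_le_sum fun σ _ => term_ge σ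

theorem three_quarters_mul_pow_le_descFactorial {p d m : ℕ} (h : 4 * m * (d + m) ≤ p + d) :
    3 / 4 * ((p : ℝ) + d) ^ m ≤ p.descFactorial m := by
  rcases m.eq_zero_or_pos with rfl | hm
  · norm_num
  have hmp : m ≤ p := by nlinarith
  have hp : (0 : ℝ) < p := by exact_mod_cast hm.trans_le hmp
  have hmp' : (0 : ℝ) ≤ p - m := sub_nonneg.2 (by exact_mod_cast hmp)
  have hratio : (p - m : ℝ) / (p + d) - 1 = -((d + m) / (p + d)) := by field_simp; ring
  have hsmall : (m : ℝ) * ((d + m) / (p + d)) ≤ 1 / 4 := by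
    have h' : (4 : ℝ) * m * (d + m) ≤ p + d := by exact_mod_cast h
    rw [← mul_div_assoc, div_le_iff₀ (by positivity)]
    linarith
  have bernoulli : 3 / 4 ≤ ((p - m : ℝ) / (p + d)) ^ m := by
    have h_nonneg : 0 ≤ (p - m : ℝ) / (p + d) := by positivity
    have ha : -1 ≤ (p - m : ℝ) / (p + d) := by linarith
    have := one_add_mul_sub_le_pow ha m
    rw [hratio] at this
    linarith
  calc 3 / 4 * ((p : ℝ) + d) ^ m ≤ ((p - m : ℝ) / (p + d)) ^ m * (p + d) ^ m := by gcongr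
    _ = (p - m : ℝ) ^ m := by rw [← mul_pow, div_mul_cancel₀ _ (by positivity)]
    _ ≤ ((p + 1 - m : ℕ) : ℝ) ^ m := by
        gcongr
        rw [Nat.cast_sub (by omega)]
        push_cast
        linarith
    _ ≤ p.descFactorial m := by exact_mod_cast Nat.pow_sub_le_descFactorial p m

theorem half_pow_le_rectPerm {A : Matrix α β ℝ} (hA : ∀ i j, |A i j| ≤ 1) (D : Finset β)
    (hD : ∀ i, ∀ j ∉ D, A i j = 1)
    (h : 4 * Fintype.card α * (#D + Fintype.card α) ≤ Fintype.card β) :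
    (Fintype.card β : ℝ) ^ Fintype.card α / 2 ≤ rectPerm A := by
  classical
  have hcard : #Dᶜ + #D = Fintype.card β := card_compl_add_card D
  have h_good := three_quarters_mul_pow_le_descFactorial (h.trans hcard.ge)
  have h_all : ((Fintype.card β).descFactorial (Fintype.card α) : ℝ) ≤
      (Fintype.card β : ℝ) ^ Fintype.card α := by
    exact_mod_cast Nat.descFactorial_le_pow _ _
  have h_perm := two_mul_descFactorial_sub_le_rectPerm hA Dᶜ fun i j hj => hD i j (mem_compl.1 hj)
  have hcard' : ((#Dᶜ : ℝ) + #D) = Fintype.card β := by exact_mod_cast hcard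
  rw [hcard'] at h_good
  linarith

variable [DecidableEq α]

theorem abs_momentCoeff {A : Matrix α β ℝ} (S : Finset α) :
    |momentCoeff A S| = (#S)! * |rectPerm (keepRows A Sᶜ)| := by
  simp [momentCoeff, abs_mul]

theorem abs_momentCoeff_le {A : Matrix α β ℝ} (hA : ∀ i j, |A i j| ≤ 1) (S : Finset α) :
    |momentCoeff A S| ≤ (#S)! * (Fintype.card β : ℝ) ^ #Sᶜ := by
  rw [abs_momentCoeff]
  gcongr
  refine (abs_rectPerm_le_descFactorial fun _ _ => hA _ _).trans ?_
  rw [Fintype.card_coe]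
  exact_mod_cast Nat.descFactorial_le_pow _ _

theorem mul_abs_momentCoeff_le {A : Matrix α β ℝ} (hA : ∀ i j, |A i j| ≤ 1) {S T : Finset α}
    (hST : #S < #T) :
    Fintype.card β * |momentCoeff A T| ≤
      (Fintype.card α)! * (Fintype.card β : ℝ) ^ #Sᶜ := by
  obtain hβ | hβ := (Fintype.card β).eq_zero_or_pos
  · rw [hβ, Nat.cast_zero, zero_mul]
    positivity
  have hT : #T ≤ Fintype.card α := card_le_univ _
  have h_exp : #Tᶜ + 1 ≤ #Sᶜ := by rw [card_compl, card_compl]; omega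
  have hβ_one : (1 : ℝ) ≤ Fintype.card β := by exact_mod_cast hβ
  calc Fintype.card β * |momentCoeff A T|
      ≤ Fintype.card β * ((#T)! * (Fintype.card β : ℝ) ^ #Tᶜ) := by
        gcongr
        exact abs_momentCoeff_le hA _
    _ = (#T)! * (Fintype.card β : ℝ) ^ (#Tᶜ + 1) := by ring
    _ ≤ (Fintype.card α)! * (Fintype.card β : ℝ) ^ #Sᶜ := by gcongr

theorem half_pow_le_abs_momentCoeff {A : Matrix α β ℝ} (hA : ∀ i j, |A i j| ≤ 1) (D : Finset β)
    (hD : ∀ i, ∀ j ∉ D, A i j = 1)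
    (h : 4 * Fintype.card α * (#D + Fintype.card α) ≤ Fintype.card β) (S : Finset α) :
    (Fintype.card β : ℝ) ^ #Sᶜ / 2 ≤ |momentCoeff A S| := by
  have hS : Fintype.card ↥Sᶜ ≤ Fintype.card α := by
    rw [Fintype.card_coe]
    exact card_le_univ _
  have h_perm := half_pow_le_rectPerm (A := keepRows A Sᶜ) (fun _ _ => hA _ _) D
    (fun i => hD i) ((by gcongr : _ ≤ _).trans h)
  rw [Fintype.card_coe] at h_perm
  rw [abs_momentCoeff]
  calc (Fintype.card β : ℝ) ^ #Sᶜ / 2 ≤ 1 * |rectPerm (keepRows A Sᶜ)| := by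
        rw [one_mul]
        exact h_perm.trans (le_abs_self _)
    _ ≤ (#S)! * |rectPerm (keepRows A Sᶜ)| := by
        gcongr
        exact_mod_cast (#S).factorial_pos

end Bounds

section MixedRadix

variable {ι : Type*} [Fintype ι] [LinearOrder ι] [LocallyFiniteOrderTop ι]

theorem sum_ne_zero_of_dominant {c δ : ι → ℝ} {N : ℝ} {t : ι}
    (hc : N * ∑ s ∈ Ioi t, |c s| < |c t|) (hbelow : ∀ s < t, δ s = 0) (ht : 1 ≤ |δ t|)
    (habove : ∀ s > t, |δ s| ≤ N) :
    ∑ s, c s * δ s ≠ 0 := by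
  intro hsum
  have leading_eq : c t * δ t = -∑ s ∈ Ioi t, c s * δ s := by
    have h_below (s : ι) (hs : s ∉ insert t (Ioi t)) : c s * δ s = 0 := by
      rw [mem_insert, mem_Ioi, ← le_iff_eq_or_lt', not_le] at hs
      rw [hbelow s hs, mul_zero]
    rw [eq_neg_iff_add_eq_zero, ← hsum, ← sum_insert (f := fun s => c s * δ s) (by simp)]
    exact sum_subset (subset_univ _) fun s _ hs => h_below s hs
  have : |c t| < |c t| :=
    calc |c t| ≤ |c t| * |δ t| := le_mul_of_one_le_right (abs_nonneg _) ht
      _ = |∑ s ∈ Ioi t, c s * δ s| := by rw [← abs_mul, leading_eq, abs_neg]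
      _ ≤ ∑ s ∈ Ioi t, |c s| * |δ s| := (abs_sum_le_sum_abs _ _).trans_eq (by simp only [abs_mul])
      _ ≤ ∑ s ∈ Ioi t, |c s| * N := by gcongr with s hs; exact habove s (mem_Ioi.1 hs)
      _ = N * ∑ s ∈ Ioi t, |c s| := by rw [← sum_mul, mul_comm]
      _ < |c t| := hc
  exact this.false

theorem injective_sum_mul_digits {c : ι → ℝ} {N : ℕ} (hc : ∀ t, N * ∑ s ∈ Ioi t, |c s| < |c t|) :
    Function.Injective fun w : ι → Fin (N + 1) => ∑ t, c t * (w t : ℝ) := by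
  intro w w' hw
  by_contra hne
  obtain ⟨t, ht, hmin⟩ := exists_minimal (s := {t | w t ≠ w' t})
    (by simpa [Finset.Nonempty] using Function.ne_iff.1 hne)
  let δ (s : ι) : ℤ := (w s : ℤ) - w' s
  have hδ (s : ι) : |(δ s : ℝ)| ≤ N := by
    have : |δ s| ≤ N := by rw [abs_le]; grind
    exact_mod_cast this
  refine sum_ne_zero_of_dominant (hc t) ?_ ?_ (fun s _ => hδ s) ?_
  · intro s hs
    have : w s = w' s := by
      by_contra h
      exact (hmin (by simpa using h) hs.le).not_gt hs
    simp [δ, this]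
  · have : δ t ≠ 0 := sub_ne_zero.2 <| by simpa [Fin.ext_iff] using ht
    exact_mod_cast Int.one_le_abs this
  · simpa [δ, mul_sub, sub_eq_zero] using hw

end MixedRadix

section Signs

variable {α β τ : Type*} [Fintype α] [Fintype τ]

theorem sum_prod_mul_prod_units [DecidableEq α] (S T : Finset α) :
    ∑ v : α → ℤˣ, (((∏ i ∈ S, v i) * ∏ i ∈ T, v i : ℤˣ) : ℝ) =
      if S = T then 2 ^ Fintype.card α else 0 := by
  have factor (i : α) : ∑ u : ℤˣ, (((if i ∈ S then u else 1) * (if i ∈ T then u else 1) : ℤˣ) : ℝ) =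
      if i ∈ S ↔ i ∈ T then 2 else 0 := by
    by_cases hS : i ∈ S <;> by_cases hT : i ∈ T <;> simp [hS, hT]
  calc ∑ v : α → ℤˣ, (((∏ i ∈ S, v i) * ∏ i ∈ T, v i : ℤˣ) : ℝ)
      = ∑ v : α → ℤˣ, ∏ i,
          (((if i ∈ S then v i else 1) * (if i ∈ T then v i else 1) : ℤˣ) : ℝ) := by
        refine Fintype.sum_congr _ _ fun v => ?_
        rw [← prod_ite_mem_eq S, ← prod_ite_mem_eq T, ← prod_mul_distrib]
        push_cast
        rfl
    _ = ∏ i, if i ∈ S ↔ i ∈ T then (2 : ℝ) else 0 := by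
        rw [← Fintype.prod_sum fun (i : α) (u : ℤˣ) =>
          (((if i ∈ S then u else 1) * (if i ∈ T then u else 1) : ℤˣ) : ℝ)]
        simp only [factor]
    _ = if S = T then 2 ^ Fintype.card α else 0 := by
        split_ifs with h
        · simp [h]
        · obtain ⟨i, hi⟩ : ∃ i, ¬(i ∈ S ↔ i ∈ T) := by simpa [Finset.ext_iff] using h
          exact prod_eq_zero (mem_univ i) (if_neg hi)


/-- The real matrix of a matrix of signs. Working over `ℤˣ` makes products of `±1` entries again
admissible entries. -/
def signMatrix {α β : Type*} (A : Matrix α β ℤˣ) : Matrix α β ℝ :=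
  A.map fun u => (u : ℝ)

theorem abs_signMatrix_le_one {α β : Type*} (A : Matrix α β ℤˣ) (i : α) (j : β) :
    |signMatrix A i j| ≤ 1 := by
  rcases Int.units_eq_one_or (A i j) with h | h <;> simp [signMatrix, h]

theorem signMatrix_addRow {α β : Type*} (x : β → ℤˣ) (A : Matrix α β ℤˣ) :
    signMatrix (addRow x A) = addRow (fun j => (x j : ℝ)) (signMatrix A) := by
  ext (_ | i) j <;> rfl

/-- The columns of the construction: for every `t : τ` a block of `N` copies of each sign vector,
followed by `R` filler columns. -/
abbrev BlockCols (α τ : Type*) (N R : ℕ) : Type _ :=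
  (τ × Fin N × (α → ℤˣ)) ⊕ Fin R

/-- The base rows: a block column carries its own sign vector, a filler column is all ones. -/
def blockRows (α τ : Type*) (N R : ℕ) : Matrix α (BlockCols α τ N R) ℤˣ :=
  fun i => Sum.elim (fun p => p.2.2 i) 1

/-- The extra row encoding the digits `w`: in block `t` it is the Walsh function of `s t`, with
positive sign on the first `w t` copies and negative sign on the others. -/
def codeRow {N R : ℕ} (s : τ → Finset α) (w : τ → Fin (N + 1)) : BlockCols α τ N R → ℤˣ :=
  Sum.elim (fun p => (if (p.2.1 : ℕ) < w p.1 then 1 else -1) * ∏ i ∈ s p.1, p.2.2 i) 1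

theorem sum_ite_lt_one_neg_one {N : ℕ} (m : Fin (N + 1)) :
    ∑ a : Fin N, (((if (a : ℕ) < m then 1 else -1 : ℤˣ)) : ℝ) = 2 * m - N := by
  have sign_eq (a : Fin N) : (((if (a : ℕ) < m then 1 else -1 : ℤˣ)) : ℝ) =
      2 * (if (a : ℕ) < m then 1 else 0) - 1 := by
    split_ifs <;> norm_num
  have card_lt : #{a : Fin N | (a : ℕ) < m} = (m : ℕ) := by
    rw [Fin.card_filter_val_lt, min_eq_right m.is_le]
  simp only [sign_eq, sum_sub_distrib, ← mul_sum, sum_boole, card_lt]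
  simp

variable [DecidableEq α] {N R : ℕ}

theorem sum_codeRow_mul_prod (s : τ → Finset α) (w : τ → Fin (N + 1)) (S : Finset α) :
    ∑ j, (codeRow s w j : ℝ) * ∏ i ∈ S, signMatrix (blockRows α τ N R) i j =
      R + ∑ t, if S = s t then 2 ^ Fintype.card α * (2 * (w t : ℝ) - N) else 0 := by
  have sum_block (t : τ) : ∑ q : Fin N × (α → ℤˣ),
      (((if (q.1 : ℕ) < w t then 1 else -1) * ∏ i ∈ s t, q.2 i : ℤˣ) : ℝ) * ∏ i ∈ S, (q.2 i : ℝ) =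
      if S = s t then 2 ^ Fintype.card α * (2 * (w t : ℝ) - N) else 0 := by
    calc _ = (∑ a : Fin N, (((if (a : ℕ) < w t then 1 else -1 : ℤˣ)) : ℝ)) *
          ∑ v : α → ℤˣ, (((∏ i ∈ S, v i) * ∏ i ∈ s t, v i : ℤˣ) : ℝ) := by
          rw [Fintype.sum_mul_sum, Fintype.sum_prod_type]
          refine Fintype.sum_congr _ _ fun a => Fintype.sum_congr _ _ fun v => ?_
          push_cast
          ring
      _ = _ := by
          rw [sum_ite_lt_one_neg_one, sum_prod_mul_prod_units, mul_ite, mul_zero, mul_comm]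
  rw [Fintype.sum_sum_type, Fintype.sum_prod_type, add_comm]
  congr 1
  · simp [codeRow, signMatrix, blockRows]
  · exact Fintype.sum_congr _ _ sum_block

theorem exists_rectPerm_addRow_codeRow_eq (s : τ → Finset α) :
    ∃ a : ℝ, ∀ w : τ → Fin (N + 1),
      rectPerm (signMatrix (addRow (codeRow s w) (blockRows α τ N R))) =
        a + 2 * 2 ^ Fintype.card α *
          ∑ t, momentCoeff (signMatrix (blockRows α τ N R)) (s t) * (w t : ℝ) := by
  set c := momentCoeff (signMatrix (blockRows α τ N R))
  refine ⟨∑ S, c S * R - ∑ t, c (s t) * (2 ^ Fintype.card α * N), fun w => ?_⟩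
  have swap : ∑ S, ∑ t, (if S = s t then c S * (2 ^ Fintype.card α * (2 * (w t : ℝ) - N)) else 0) =
      ∑ t, c (s t) * (2 ^ Fintype.card α * (2 * (w t : ℝ) - N)) := by
    rw [sum_comm]
    simp only [sum_ite_eq', mem_univ, if_true]
  rw [signMatrix_addRow, rectPerm_addRow_eq_sum]
  simp only [sum_codeRow_mul_prod, mul_add, sum_add_distrib, mul_sum, mul_ite, mul_zero]
  rw [swap, sub_add, ← sum_sub_distrib, sub_eq_add_neg, ← sum_neg_distrib]
  congr 1
  exact Fintype.sum_congr _ _ fun t => by ring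

theorem mul_sum_Ioi_abs_momentCoeff_lt {β τ : Type*} [Fintype β] [LinearOrder τ]
    [LocallyFiniteOrderTop τ] {A : Matrix α β ℝ}
    (hA : ∀ i j, |A i j| ≤ 1) (D : Finset β) (hD : ∀ i, ∀ j ∉ D, A i j = 1)
    (h : 4 * Fintype.card α * (#D + Fintype.card α) ≤ Fintype.card β)
    (hN : 2 * (N * (Fintype.card α * (Fintype.card α)!)) < Fintype.card β)
    {s : τ → Finset α} (hs : StrictMono fun t => #(s t)) (t : τ) :
    N * ∑ u ∈ Ioi t, |momentCoeff A (s u)| < |momentCoeff A (s t)| := by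
  set k := Fintype.card α
  set n := Fintype.card β
  have hn : 0 < n := by omega
  have card_Ioi : #(Ioi t) ≤ k := by
    have h_maps : Set.MapsTo (fun u => #(s u)) (Ioi t) (Ioc 0 k) := fun u hu => by
      simpa using ⟨card_pos.1 ((Nat.zero_le _).trans_lt (hs (mem_Ioi.1 hu))), card_le_univ (s u)⟩
    simpa using card_le_card_of_injOn _ h_maps hs.injective.injOn
  have hN' : N * (k * (k ! : ℝ)) < n / 2 := by
    rw [lt_div_iff₀ two_pos, mul_comm]
    exact_mod_cast hN
  refine lt_of_mul_lt_mul_left ?_ (n.cast_nonneg : (0 : ℝ) ≤ n)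
  calc n * (N * ∑ u ∈ Ioi t, |momentCoeff A (s u)|)
      = N * ∑ u ∈ Ioi t, n * |momentCoeff A (s u)| := by rw [mul_left_comm, mul_sum]
    _ ≤ N * (#(Ioi t) • (k ! * (n : ℝ) ^ #(s t)ᶜ)) := by
        gcongr
        exact sum_le_card_nsmul _ _ _ fun u hu => mul_abs_momentCoeff_le hA (hs (mem_Ioi.1 hu))
    _ ≤ N * (k * (k ! * (n : ℝ) ^ #(s t)ᶜ)) := by
        rw [nsmul_eq_mul]
        gcongr
    _ = N * (k * k !) * (n : ℝ) ^ #(s t)ᶜ := by ring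
    _ < n / 2 * (n : ℝ) ^ #(s t)ᶜ := by gcongr
    _ = n * ((n : ℝ) ^ #(s t)ᶜ / 2) := by ring
    _ ≤ n * |momentCoeff A (s t)| := by
        gcongr
        exact half_pow_le_abs_momentCoeff hA D hD h _

theorem injective_rectPerm_addRow_codeRow [LinearOrder τ] [LocallyFiniteOrderTop τ]
    (h : 4 * Fintype.card α * (Fintype.card τ * (N * 2 ^ Fintype.card α) + Fintype.card α) ≤
      Fintype.card (BlockCols α τ N R))
    (hN : 2 * (N * (Fintype.card α * (Fintype.card α)!)) < Fintype.card (BlockCols α τ N R))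
    {s : τ → Finset α} (hs : StrictMono fun t => #(s t)) :
    Function.Injective fun w : τ → Fin (N + 1) =>
      rectPerm (signMatrix (addRow (codeRow s w) (blockRows α τ N R))) := by
  let D : Finset (BlockCols α τ N R) := univ.map .inl
  have card_D : #D = Fintype.card τ * (N * 2 ^ Fintype.card α) := by simp [D]
  have filler_eq_one (i : α) (j : BlockCols α τ N R) (hj : j ∉ D) :
      signMatrix (blockRows α τ N R) i j = 1 := by
    rcases j with p | r
    · simp [D] at hj
    · simp [signMatrix, blockRows]
  have dominant := mul_sum_Ioi_abs_momentCoeff_lt (abs_signMatrix_le_one _) D filler_eq_one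
    (by rwa [card_D]) hN hs
  obtain ⟨a, ha⟩ := exists_rectPerm_addRow_codeRow_eq (N := N) (R := R) s
  intro w w' hw
  simp only [ha] at hw
  exact injective_sum_mul_digits dominant <|
    mul_left_cancel₀ (by positivity) (add_left_cancel hw)

end Signs

theorem permCount_eq_ncard_range (k n : ℕ) :
    permCount k n =
      (Set.range fun A : Matrix (Fin k) (Fin n) ℤˣ => rectPerm (signMatrix A)).ncard := by
  classical
  rw [permCount]
  congr 1
  ext x
  constructor
  · rintro ⟨A, hA, rfl⟩
    refine ⟨.of fun i j => if A i j = 1 then 1 else -1, congrArg rectPerm ?_⟩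
    ext i j
    rcases hA i j with h | h <;> norm_num [signMatrix, h]
  · rintro ⟨A, rfl⟩
    refine ⟨signMatrix A, fun i j => ?_, rfl⟩
    rcases Int.units_eq_one_or (A i j) with h | h <;> simp [signMatrix, h]

theorem card_le_permCount {ω α β : Type*} [Fintype ω] [Fintype α] [Fintype β] {k n : ℕ}
    (hα : Fintype.card α = k) (hβ : Fintype.card β = n) {A : ω → Matrix α β ℤˣ}
    (hA : Function.Injective fun w => rectPerm (signMatrix (A w))) :
    Fintype.card ω ≤ permCount k n := by
  let e : Fin k ≃ α := (Fintype.equivFinOfCardEq hα).symm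
  let f : Fin n ≃ β := (Fintype.equivFinOfCardEq hβ).symm
  rw [permCount_eq_ncard_range, ← Nat.card_eq_fintype_card, ← Set.ncard_univ,
    ← Set.ncard_image_of_injective _ hA, Set.image_univ]
  refine Set.ncard_le_ncard ?_ (Set.finite_range _)
  rintro _ ⟨w, rfl⟩
  exact ⟨(A w).submatrix e f, rectPerm_submatrix_equiv (signMatrix (A w)) e f⟩

theorem exists_pow_le_permCount (k : ℕ) :
    ∃ C : ℕ, 0 < C ∧ ∀ N n : ℕ, C * N ≤ n → (N + 1) ^ (k + 1) ≤ permCount (k + 1) n := by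
  let a := (k + 1) * 2 ^ k
  refine ⟨a + 4 * k * (a + k) + 2 * (k * k !), by positivity, fun N n hn => ?_⟩
  obtain rfl | hN := N.eq_zero_or_pos
  · simpa using card_le_permCount (ω := Unit) (Fintype.card_fin (k + 1)) (Fintype.card_fin n)
      (A := fun _ _ _ => 1) (Function.injective_of_subsingleton _)
  have ha : 0 < a := by positivity
  have hcols : a * N ≤ n := by
    refine le_trans ?_ hn
    gcongr
    lia
  have hbase : 4 * k * (a * N + k) ≤ n :=
    calc 4 * k * (a * N + k) ≤ 4 * k * (a * N + k * N) := by
          gcongr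
          exact Nat.le_mul_of_pos_right k hN
      _ = 4 * k * (a + k) * N := by ring
      _ ≤ (a + 4 * k * (a + k) + 2 * (k * k !)) * N := by gcongr; lia
      _ ≤ n := hn
  have hdigits : 2 * (N * (k * k !)) < n :=
    calc 2 * (N * (k * k !)) = 2 * (k * k !) * N := by ring
      _ < (a + 4 * k * (a + k) + 2 * (k * k !)) * N := by gcongr; lia
      _ ≤ n := hn
  have hblocks : (k + 1) * (N * 2 ^ k) = a * N := by ring
  obtain ⟨R, rfl⟩ := Nat.exists_eq_add_of_le hcols
  have card_cols : Fintype.card (BlockCols (Fin k) (Fin (k + 1)) N R) = a * N + R := by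
    simp [hblocks]
  let s (t : Fin (k + 1)) : Finset (Fin k) := {i | (i : ℕ) < t}
  have hs : StrictMono fun t => #(s t) := by
    have card_s (t : Fin (k + 1)) : #(s t) = t := by
      rw [Fin.card_filter_val_lt, min_eq_right t.is_le]
    simpa only [card_s] using Fin.val_strictMono
  have hinj := injective_rectPerm_addRow_codeRow (N := N) (R := R)
    (by simpa only [Fintype.card_fin, card_cols, hblocks] using hbase)
    (by simpa only [Fintype.card_fin, card_cols] using hdigits) hs
  simpa using card_le_permCount (by simp) card_cols hinj

theorem stmt0_general (k : ℕ) :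
    ∃ ε : ℝ, 0 < ε ∧ ∀ n : ℕ, ε * (n : ℝ) ^ (k + 1) ≤ (permCount (k + 1) n : ℝ) := by
  obtain ⟨C, hC, hperm⟩ := exists_pow_le_permCount k
  refine ⟨(C⁻¹ : ℝ) ^ (k + 1), by positivity, fun n => ?_⟩
  have hn : (C⁻¹ : ℝ) * n ≤ (n / C : ℕ) + 1 := by
    rw [inv_mul_le_iff₀ (by positivity)]
    exact_mod_cast (Nat.lt_mul_div_succ n hC).le
  calc (C⁻¹ : ℝ) ^ (k + 1) * (n : ℝ) ^ (k + 1) = ((C⁻¹ : ℝ) * n) ^ (k + 1) := (mul_pow _ _ _).symm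
    _ ≤ ((n / C : ℕ) + 1) ^ (k + 1) := by gcongr
    _ ≤ permCount (k + 1) n := by exact_mod_cast hperm (n / C) n (Nat.mul_div_le n C)

/-- For every `k ≥ 1` there exists `ε > 0` such that for all `n ≥ k + 1`,
`r_{k+1,n} ≥ ε · n^(k-2)`. -/
theorem stmt0 (k : ℕ) (hk : 1 ≤ k) :
    ∃ ε : ℝ, 0 < ε ∧ ∀ n : ℕ, k + 1 ≤ n →
      ε * (n : ℝ) ^ (k - 2) ≤ (permCount (k + 1) n : ℝ) := by
  obtain ⟨ε, hε, hperm⟩ := stmt0_general k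
  refine ⟨ε, hε, fun n hn => le_trans ?_ (hperm n)⟩
  gcongr <;> [exact_mod_cast (by omega : 1 ≤ n); omega]
end

section
/- Let k ≤ n and let n_1,…,n_k be nonnegative integers with n_1+⋯+n_k ≤ n. Then per(B_{n_1,…,n_k}) = Σ_{ℓ=0}^{k} (−2)^ℓ · (n−ℓ)_{k−ℓ} · e_ℓ(n_1,…,n_k), where (m)_j = m(m−1)⋯(m−j+1) is the falling factorial and e_ℓ is the ℓ-th elementary symmetric polynomial in k variables. -/
/-!
Write `B = A + J` with `J` the all-ones matrix. Expanding each product `∏ i, (A i (σ i) + 1)` over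
the set `S` of rows from which the entry of `A` is chosen, an injection of `S` into the columns is
counted once for each of its `(n - |S|)_{k - |S|}` extensions to all rows. If `A` has at most one
nonzero entry per column, then non-injective choices of columns contribute nothing, so the
permanent of the rows in `S` is the product of their row sums; here these are `-2 n_i`.
-/

section RectPermanent

variable {ι κ R : Type*} [Fintype ι] [Fintype κ]

/-- The permanent of a rectangular matrix with arbitrary finite index types, over any commutative
semiring; `rperm` is the case of real matrices indexed by `Fin k` and `Fin n`. -/
noncomputable def rectPermanent [CommSemiring R] (A : Matrix ι κ R) : R :=
  ∑ σ : ι ↪ κ, ∏ i, A i (σ i)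

theorem sum_embedding_restrict {M : Type*} [AddCommMonoid M] (S : Finset ι) (g : (S ↪ κ) → M) :
    ∑ σ : ι ↪ κ, g ((Function.Embedding.subtype (· ∈ S)).trans σ) =
      (Fintype.card κ - S.card).descFactorial (Fintype.card ι - S.card) • ∑ f : S ↪ κ, g f := by
  classical
  let splitEquiv : (ι ↪ κ) ≃ Σ f : S ↪ κ, {i // i ∉ S} ↪ ↥(Set.range f)ᶜ :=
    (Equiv.embeddingCongr (Equiv.sumCompl (· ∈ S)).symm (Equiv.refl κ)).trans
      Equiv.sumEmbeddingEquivSigmaEmbeddingRestricted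
  have card_extensions (f : S ↪ κ) : Fintype.card ({i // i ∉ S} ↪ ↥(Set.range f)ᶜ) =
      (Fintype.card κ - S.card).descFactorial (Fintype.card ι - S.card) := by
    rw [Fintype.card_embedding_eq, Fintype.card_compl_set, Fintype.card_subtype_compl,
      Set.card_range_of_injective f.injective, Fintype.card_coe]
  calc ∑ σ : ι ↪ κ, g ((Function.Embedding.subtype (· ∈ S)).trans σ)
      = ∑ p : Σ f : S ↪ κ, {i // i ∉ S} ↪ ↥(Set.range f)ᶜ, g p.1 :=
        Fintype.sum_equiv splitEquiv _ _ fun _ => rfl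
    _ = ∑ f : S ↪ κ, Fintype.card ({i // i ∉ S} ↪ ↥(Set.range f)ᶜ) • g f := by
        simp only [Fintype.sum_sigma, Finset.sum_const, Finset.card_univ]
    _ = _ := by simp only [card_extensions, Finset.smul_sum]

theorem rectPermanent_of_add_one [CommSemiring R] (A : Matrix ι κ R) :
    rectPermanent (Matrix.of fun i j => A i j + 1) =
      ∑ S : Finset ι, (Fintype.card κ - S.card).descFactorial (Fintype.card ι - S.card) •
        rectPermanent (A.submatrix ((↑) : S → ι) id) := by
  classical
  simp only [rectPermanent, Matrix.of_apply, Finset.prod_add_one, Finset.powerset_univ]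
  rw [Finset.sum_comm]
  refine Finset.sum_congr rfl fun S _ => ?_
  rw [← sum_embedding_restrict S]
  exact Finset.sum_congr rfl fun σ _ => (Finset.prod_coe_sort S fun i => A i (σ i)).symm

theorem rectPermanent_eq_prod_sum [CommSemiring R] {A : Matrix ι κ R}
    (hA : ∀ j, Pairwise fun i i' => A i j * A i' j = 0) :
    rectPermanent A = ∏ i, ∑ j, A i j := by
  classical
  have prod_eq_zero_of_not_injective (f : ι → κ) (hf : ¬ Function.Injective f) :
      ∏ i, A i (f i) = 0 := by
    obtain ⟨a, b, hab, hne⟩ := Function.not_injective_iff.mp hf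
    have hdvd : ∏ i ∈ {a, b}, A i (f i) ∣ ∏ i, A i (f i) :=
      Finset.prod_dvd_prod_of_subset _ _ _ (Finset.subset_univ _)
    rwa [Finset.prod_pair hne, ← hab, hA _ hne, zero_dvd_iff] at hdvd
  calc rectPermanent A = ∑ f : ι → κ, ∏ i, A i (f i) := by
        refine Finset.sum_of_injOn (fun σ : ι ↪ κ => (σ : ι → κ)) DFunLike.coe_injective.injOn
          (fun _ _ => Finset.mem_coe.mpr (Finset.mem_univ _)) (fun f _ hf => ?_) fun _ _ => rfl
        exact prod_eq_zero_of_not_injective f fun hinj => hf ⟨⟨f, hinj⟩, by simp, rfl⟩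
    _ = ∏ i, ∑ j, A i j := (Fintype.prod_sum A).symm

theorem rectPermanent_of_add_one_of_pairwise_mul_eq_zero [CommSemiring R] {A : Matrix ι κ R}
    (hA : ∀ j, Pairwise fun i i' => A i j * A i' j = 0) :
    rectPermanent (Matrix.of fun i j => A i j + 1) =
      ∑ ℓ ∈ Finset.range (Fintype.card ι + 1),
        ((Fintype.card κ - ℓ).descFactorial (Fintype.card ι - ℓ) : R) *
          ∑ S ∈ Finset.powersetCard ℓ (Finset.univ : Finset ι), ∏ i ∈ S, ∑ j, A i j := by
  have rectPermanent_rows (S : Finset ι) :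
      rectPermanent (A.submatrix ((↑) : S → ι) id) = ∏ i ∈ S, ∑ j, A i j := by
    have hAS (j : κ) : Pairwise fun i i' : S => A i j * A i' j = 0 :=
      fun _ _ hne => hA j (Subtype.coe_ne_coe.mpr hne)
    rw [rectPermanent_eq_prod_sum (A := A.submatrix ((↑) : S → ι) id) hAS]
    exact Finset.prod_coe_sort S fun i => ∑ j, A i j
  rw [rectPermanent_of_add_one, ← Finset.powerset_univ, Finset.sum_powerset, Finset.card_univ]
  refine Finset.sum_congr rfl fun ℓ _ => ?_
  rw [Finset.mul_sum]
  refine Finset.sum_congr rfl fun S hS => ?_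
  rw [rectPermanent_rows, (Finset.mem_powersetCard.mp hS).2, nsmul_eq_mul]

theorem stmt2_general [CommRing R] [DecidableEq R] (c : R) (nv : ι → ℕ) (B : Matrix ι κ R)
    (hB : ∀ i j, B i j = 1 ∨ B i j = c)
    (hcol : ∀ j, (Finset.univ.filter fun i => B i j = c).card ≤ 1)
    (hrow : ∀ i, (Finset.univ.filter fun j => B i j = c).card = nv i) :
    rectPermanent B = ∑ ℓ ∈ Finset.range (Fintype.card ι + 1),
      (c - 1) ^ ℓ * ((Fintype.card κ - ℓ).descFactorial (Fintype.card ι - ℓ) : R) *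
        ∑ S ∈ Finset.powersetCard ℓ (Finset.univ : Finset ι), ∏ i ∈ S, (nv i : R) := by
  let A : Matrix ι κ R := Matrix.of fun i j => if B i j = c then c - 1 else 0
  have hBA : B = Matrix.of fun i j => A i j + 1 := by
    ext i j
    simp only [A, Matrix.of_apply]
    split_ifs with h
    · rw [h, sub_add_cancel]
    · rw [zero_add, (hB i j).resolve_right h]
  have hA (j : κ) : Pairwise fun i i' => A i j * A i' j = 0 := fun i i' hne => by
    have : ¬ (B i j = c ∧ B i' j = c) := fun ⟨h, h'⟩ =>
      hne (Finset.card_le_one.mp (hcol j) i (by simp [h]) i' (by simp [h']))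
    grind [Matrix.of_apply]
  have row_sum (i : ι) : ∑ j, A i j = (c - 1) * nv i := by
    simp only [A, Matrix.of_apply]
    rw [← Finset.sum_filter, Finset.sum_const, hrow, nsmul_eq_mul, mul_comm]
  have prod_row_sum (S : Finset ι) :
      ∏ i ∈ S, ∑ j, A i j = (c - 1) ^ S.card * ∏ i ∈ S, (nv i : R) := by
    simp only [row_sum, Finset.prod_mul_distrib, Finset.prod_const]
  rw [hBA, rectPermanent_of_add_one_of_pairwise_mul_eq_zero hA]
  refine Finset.sum_congr rfl fun ℓ _ => ?_
  rw [mul_right_comm, mul_comm, Finset.mul_sum]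
  congr 1
  refine Finset.sum_congr rfl fun S hS => ?_
  rw [prod_row_sum, (Finset.mem_powersetCard.mp hS).2]

end RectPermanent

/-- For a `k × n` ±1 matrix `B = B_{n_1,…,n_k}` (every column contains at most one `-1`
and row `i` contains exactly `n_i` entries equal to `-1`, with `n_1 + ⋯ + n_k ≤ n`),
`per(B) = Σ_{ℓ=0}^{k} (−2)^ℓ (n−ℓ)_{k−ℓ} e_ℓ(n_1,…,n_k)`. -/
theorem stmt2 (k n : ℕ) (hkn : k ≤ n) (nv : Fin k → ℕ) (hsum : ∑ i, nv i ≤ n)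
    (B : Matrix (Fin k) (Fin n) ℝ)
    (hpm : ∀ i j, B i j = 1 ∨ B i j = -1)
    (hcol : ∀ j, (Finset.univ.filter fun i => B i j = -1).card ≤ 1)
    (hrow : ∀ i, (Finset.univ.filter fun j => B i j = -1).card = nv i) :
    rperm B = ∑ ℓ ∈ Finset.range (k + 1),
      (-2 : ℝ) ^ ℓ * (Nat.descFactorial (n - ℓ) (k - ℓ) : ℝ) *
        ∑ S ∈ Finset.powersetCard ℓ (Finset.univ : Finset (Fin k)), ∏ i ∈ S, (nv i : ℝ) := by
  have h := stmt2_general (-1) nv B hpm hcol hrow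
  rwa [Fintype.card_fin, Fintype.card_fin, show (-1 - 1 : ℝ) = -2 by norm_num] at h
end

section
/- For all integers 1 ≤ k ≤ ℓ ≤ n, one has r_{k,n} ≤ r_{ℓ,n}; that is, the number of distinct values attained by the permanent on k×n ±1 matrices is at most the number of distinct values attained by the permanent on ℓ×n ±1 matrices. In particular, r_n ≥ r_{k,n} for every k ≤ n. -/
/-!
Prepending a constant row `c` to a `k × n` matrix multiplies its permanent by `(n - k) * c`: each
injection of the old rows into the columns leaves exactly `n - k` columns for the new row. If
`k < n` and `c ≠ 0`, this scaling injects the permanent values of `k × n` matrices into those of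
`(k + 1) × n` matrices with entries in the same set, as soon as that set contains `c`.
-/

open Finset Matrix

section RowExpansion

variable {k n : ℕ}

theorem rperm_vecCons (v : Fin n → ℝ) (A : Matrix (Fin k) (Fin n) ℝ) :
    rperm (of (vecCons v A)) =
      ∑ σ : Fin k ↪ Fin n, (∑ j ∈ (univ.map σ)ᶜ, v j) * ∏ i, A i (σ i) := by
  classical
  rw [rperm, ← (Equiv.embeddingFinSucc k (Fin n)).symm.sum_comp, Fintype.sum_sigma]
  refine sum_congr rfl fun σ _ ↦ ?_
  have mem_unused (j : Fin n) : j ∈ (univ.map σ)ᶜ ↔ j ∉ Set.range σ := by simp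
  rw [sum_subtype _ mem_unused, sum_mul]
  refine sum_congr rfl fun j _ ↦ ?_
  rw [Equiv.coe_embeddingFinSucc_symm, Fin.prod_univ_succ]
  rfl

theorem rperm_vecCons_const (c : ℝ) (A : Matrix (Fin k) (Fin n) ℝ) :
    rperm (of (vecCons (fun _ ↦ c) A)) = (n - k : ℕ) * c * rperm A := by
  have card_unused (σ : Fin k ↪ Fin n) : #(univ.map σ)ᶜ = n - k := by
    rw [card_compl, card_map, card_univ, Fintype.card_fin, Fintype.card_fin]
  simp only [rperm_vecCons, sum_const, card_unused, nsmul_eq_mul]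
  rw [rperm, mul_sum]

end RowExpansion

theorem finite_matrix {m n α : Type*} [Finite m] [Finite n] {S : Set α} (hS : S.Finite) :
    (S.matrix : Set (Matrix m n α)).Finite := by
  rw [Set.matrix_eq_pi]
  exact (Set.Finite.pi fun _ ↦ Set.Finite.pi fun _ ↦ hS).preimage of.symm.injective.injOn

section PermanentValues

variable {k n : ℕ} {S : Set ℝ} {c : ℝ}

/-- The set of permanents of `k × n` matrices with entries in `S`; the case `S = {1, -1}` is the
set whose cardinality is `permCount k n`. -/
def rpermValues (S : Set ℝ) (k n : ℕ) : Set ℝ :=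
  rperm '' (S.matrix : Set (Matrix (Fin k) (Fin n) ℝ))

theorem permCount_eq_ncard_rpermValues (k n : ℕ) :
    permCount k n = (rpermValues {1, -1} k n).ncard :=
  rfl

theorem finite_rpermValues (hS : S.Finite) (k n : ℕ) : (rpermValues S k n).Finite :=
  (finite_matrix hS).image rperm

theorem mapsTo_mul_rpermValues_succ (hc : c ∈ S) :
    Set.MapsTo (((n - k : ℕ) * c) * ·) (rpermValues S k n) (rpermValues S (k + 1) n) := by
  rintro _ ⟨A, hA, rfl⟩
  exact ⟨of (vecCons (fun _ ↦ c) A), Fin.cases (fun _ ↦ hc) hA, rperm_vecCons_const c A⟩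

theorem ncard_rpermValues_le_succ (hS : S.Finite) (hc : c ∈ S) (hc₀ : c ≠ 0) (hkn : k < n) :
    (rpermValues S k n).ncard ≤ (rpermValues S (k + 1) n).ncard := by
  have scale_ne_zero : ((n - k : ℕ) : ℝ) * c ≠ 0 :=
    mul_ne_zero (Nat.cast_ne_zero.mpr (Nat.sub_ne_zero_of_lt hkn)) hc₀
  exact Set.ncard_le_ncard_of_injOn _ (mapsTo_mul_rpermValues_succ hc)
    (mul_right_injective₀ scale_ne_zero).injOn (finite_rpermValues hS _ _)

end PermanentValues

theorem stmt4_general {S : Set ℝ} (hS : S.Finite) {c : ℝ} (hc : c ∈ S) (hc₀ : c ≠ 0) (n : ℕ) :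
    MonotoneOn (fun k ↦ (rpermValues S k n).ncard) (Set.Iic n) :=
  monotoneOn_of_le_add_one Set.ordConnected_Iic fun _ _ _ hkn ↦
    ncard_rpermValues_le_succ hS hc hc₀ hkn

theorem monotoneOn_permCount (n : ℕ) : MonotoneOn (permCount · n) (Set.Iic n) := by
  simpa only [permCount_eq_ncard_rpermValues] using
    stmt4_general (Set.toFinite {1, -1}) (Set.mem_insert 1 _) one_ne_zero n

/-- For `1 ≤ k ≤ ℓ ≤ n` one has `r_{k,n} ≤ r_{ℓ,n}`; in particular
`r_{k,n} ≤ r_n = r_{n,n}` for every `k ≤ n`. -/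
theorem stmt4 :
    (∀ k l n : ℕ, 1 ≤ k → k ≤ l → l ≤ n → permCount k n ≤ permCount l n) ∧
    (∀ k n : ℕ, 1 ≤ k → k ≤ n → permCount k n ≤ permCount n n) :=
  ⟨fun _ _ n _ hkl hln ↦ monotoneOn_permCount n (hkl.trans hln) hln hkl,
    fun _ n _ hkn ↦ monotoneOn_permCount n hkn Set.self_mem_Iic hkn⟩
end

section
/- Let k+1 ≤ n and let B be any k×n matrix with entries ±1. Then the sets {per(a ∗ B) : a ∈ {−1,1}^n} and {per(ε ∗ B) : ε ∈ {0,1}^n} have the same cardinality, where v ∗ B denotes the (k+1)×n matrix whose first row is the row vector v and whose remaining rows are those of B. -/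
/-!
The permanent is linear in its first row, so it sends the cube `{a, b}ⁿ = a • 1 + (b - a) • {0, 1}ⁿ`
of first rows to a translate of a nonzero multiple of the image of `{0, 1}ⁿ`.
-/

section Cube

open Set
open scoped Pointwise

variable {ι R M : Type*} [Ring R] [AddCommGroup M] [Module R M]

theorem univ_pi_pair_eq_vadd_smul (a b : R) :
    (univ.pi fun _ : ι => ({a, b} : Set R)) =
      Function.const ι a +ᵥ (b - a) • univ.pi fun _ => ({0, 1} : Set R) := by
  have hpair : ({a, b} : Set R) = a +ᵥ (b - a) • ({0, 1} : Set R) := by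
    simp [← image_smul, ← image_vadd, image_pair]
  rw [smul_set_univ_pi, hpair]
  exact (piMap_image_univ_pi (fun _ => (a +ᵥ ·)) _).symm

theorem image_univ_pi_pair (f : (ι → R) →ₗ[R] M) (a b : R) :
    (f '' univ.pi fun _ => {a, b}) =
      f (Function.const ι a) +ᵥ (b - a) • (f '' univ.pi fun _ => {0, 1}) := by
  rw [univ_pi_pair_eq_vadd_smul, ← image_smul_set]
  exact image_vadd_distrib f _ _

theorem encard_image_univ_pi_pair [IsDomain R] [Module.IsTorsionFree R M]
    (f : (ι → R) →ₗ[R] M) {a b : R} (hab : a ≠ b) :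
    (f '' univ.pi fun _ => {a, b}).encard = (f '' univ.pi fun _ => {0, 1}).encard := by
  rw [image_univ_pi_pair, encard_vadd_set]
  exact (smul_right_injective M (sub_ne_zero.mpr hab.symm)).encard_image _

end Cube

section Permanent

variable {k n : ℕ} (B : Matrix (Fin k) (Fin n) ℝ)

theorem rperm_cons (v : Fin n → ℝ) :
    rperm (Matrix.of (Fin.cons v B)) =
      ∑ σ : Fin (k + 1) ↪ Fin n, v (σ 0) * ∏ i : Fin k, B i (σ i.succ) := by
  simp only [rperm, Fin.prod_univ_succ]
  rfl

/-- The permanent of the matrix with first row `v` and remaining rows `B`, as a linear function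
of `v`. -/
noncomputable def rpermConsLinearMap : (Fin n → ℝ) →ₗ[ℝ] ℝ where
  toFun v := rperm (Matrix.of (Fin.cons v B))
  map_add' v w := by simp only [rperm_cons, Pi.add_apply, add_mul, Finset.sum_add_distrib]
  map_smul' c v := by
    simp only [rperm_cons, Pi.smul_apply, smul_eq_mul, mul_assoc, Finset.mul_sum, RingHom.id_apply]

theorem setOf_rperm_cons_eq_image (a b : ℝ) :
    {x : ℝ | ∃ v : Fin n → ℝ, (∀ j, v j = a ∨ v j = b) ∧
        rperm (Matrix.of (Fin.cons v B)) = x} =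
      rpermConsLinearMap B '' Set.univ.pi fun _ => {a, b} := by
  simp [Set.image, Set.mem_pi, rpermConsLinearMap]

theorem stmt5_general {a b c d : ℝ} (hab : a ≠ b) (hcd : c ≠ d) :
    {x : ℝ | ∃ v : Fin n → ℝ, (∀ j, v j = a ∨ v j = b) ∧
        rperm (Matrix.of (Fin.cons v B)) = x}.ncard =
    {x : ℝ | ∃ w : Fin n → ℝ, (∀ j, w j = c ∨ w j = d) ∧
        rperm (Matrix.of (Fin.cons w B)) = x}.ncard := by
  rw [setOf_rperm_cons_eq_image, setOf_rperm_cons_eq_image, Set.ncard, Set.ncard,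
    encard_image_univ_pi_pair _ hab, encard_image_univ_pi_pair _ hcd]

end Permanent

/-- For `k + 1 ≤ n` and any `k × n` ±1 matrix `B`, the sets
`{per(a ∗ B) : a ∈ {−1,1}^n}` and `{per(ε ∗ B) : ε ∈ {0,1}^n}` have the same
cardinality, where `v ∗ B` prepends the row `v` to `B`. -/
theorem stmt5 (k n : ℕ) (h : k + 1 ≤ n) (B : Matrix (Fin k) (Fin n) ℝ)
    (hpm : ∀ i j, B i j = 1 ∨ B i j = -1) :
    {x : ℝ | ∃ a : Fin n → ℝ, (∀ j, a j = 1 ∨ a j = -1) ∧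
        rperm (Matrix.of (Fin.cons a B)) = x}.ncard =
    {x : ℝ | ∃ e : Fin n → ℝ, (∀ j, e j = 0 ∨ e j = 1) ∧
        rperm (Matrix.of (Fin.cons e B)) = x}.ncard :=
  stmt5_general B (by norm_num) zero_ne_one
end

section
/- Let k ≤ n and let B be a k×n matrix with entries ±1. For a subset J ⊆ {1,…,k}, let Γ_{≥J} denote the set of injective functions σ : {1,…,k} → {1,…,n} such that B_{i,σ(i)} = −1 for every i ∈ J. Then per(B) = Σ_{J ⊆ {1,…,k}} (−2)^{|J|} · |Γ_{≥J}|. -/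
open Finset

section TwoValued

variable {ι κ R : Type*} [CommRing R] [DecidableEq R] {c : R}

lemma prod_eq_sum_powerset_filter_sub_one_pow {s : Finset ι} {f : ι → R}
    (hf : ∀ i ∈ s, f i = 1 ∨ f i = c) :
    ∏ i ∈ s, f i = ∑ J ∈ ({i ∈ s | f i = c} : Finset ι).powerset, (c - 1) ^ #J :=
  calc ∏ i ∈ s, f i
      = ∏ i ∈ s, if f i = c then 1 + (c - 1) else 1 :=
        prod_congr rfl fun i hi => by
          split_ifs with hc
          · rw [hc, add_sub_cancel]
          · exact (hf i hi).resolve_right hc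
    _ = ∏ i ∈ s with f i = c, (1 + (c - 1)) := (prod_filter _ _).symm
    _ = ∑ J ∈ ({i ∈ s | f i = c} : Finset ι).powerset, (c - 1) ^ #J := by
        simp only [prod_one_add, prod_const]

theorem stmt6_general [Fintype ι] [Fintype κ] {B : Matrix ι κ R}
    (hB : ∀ i j, B i j = 1 ∨ B i j = c) :
    ∑ σ : ι ↪ κ, ∏ i, B i (σ i) =
      ∑ J : Finset ι, (c - 1) ^ #J * (#{σ : ι ↪ κ | ∀ i ∈ J, B i (σ i) = c} : R) :=
  calc ∑ σ : ι ↪ κ, ∏ i, B i (σ i)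
      = ∑ σ : ι ↪ κ, ∑ J ∈ ({i | B i (σ i) = c} : Finset ι).powerset, (c - 1) ^ #J :=
        sum_congr rfl fun σ _ => prod_eq_sum_powerset_filter_sub_one_pow fun i _ => hB i (σ i)
    _ = ∑ J : Finset ι, ∑ σ : ι ↪ κ with ∀ i ∈ J, B i (σ i) = c, (c - 1) ^ #J :=
        sum_comm' fun σ J => by
          simp only [mem_univ, mem_powerset, subset_iff, mem_filter, true_and, and_true]
    _ = ∑ J : Finset ι, (c - 1) ^ #J * (#{σ : ι ↪ κ | ∀ i ∈ J, B i (σ i) = c} : R) := by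
        simp only [sum_const, nsmul_eq_mul']

end TwoValued

/-- For a `k × n` ±1 matrix `B` with `k ≤ n`,
`per(B) = Σ_{J ⊆ [k]} (−2)^{|J|} · |Γ_{≥J}|`, where `Γ_{≥J}` is the set of
injections `σ : [k] ↪ [n]` with `B_{i,σ(i)} = −1` for all `i ∈ J`. -/
theorem stmt6 (k n : ℕ) (hkn : k ≤ n) (B : Matrix (Fin k) (Fin n) ℝ)
    (hpm : ∀ i j, B i j = 1 ∨ B i j = -1) :
    rperm B = ∑ J : Finset (Fin k),
      (-2 : ℝ) ^ J.card *
        ((Finset.univ.filter fun σ : Fin k ↪ Fin n => ∀ i ∈ J, B i (σ i) = -1).card : ℝ) := by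
  rw [rperm, stmt6_general hpm, show (-1 : ℝ) - 1 = -2 by norm_num]
  -- The two counts differ only in the decidability instance of the filter.
  congr!
end

section
/- Let k ≤ n, let n_1,…,n_k be nonnegative integers with n_1+⋯+n_k ≤ n, and let B = B_{n_1,…,n_k}. For every subset J ⊆ {1,…,k}, the number of injective functions σ : {1,…,k} → {1,…,n} satisfying B_{i,σ(i)} = −1 for all i ∈ J equals (Π_{i∈J} n_i) · (n−|J|)_{k−|J|}, where (m)_j = m(m−1)⋯(m−j+1) is the falling factorial. -/
/-!
Let `S i` be the set of columns where row `i` of `B` has a `-1`; the sets `S i` are disjoint.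
Any choice of values `σ i ∈ S i` for `i ∈ J` is then automatically injective, which gives the
product. Each such choice extends to the complement of `J` by an arbitrary injection into the
values not yet taken.
-/

section

open Finset Function

variable {ι α : Type*}

theorem injective_of_mem_pairwise_disjoint {S : ι → Finset α} (hS : Pairwise (Disjoint on S))
    {f : ι → α} (hf : ∀ i, f i ∈ S i) : Injective f := fun i j hij ↦
  hS.eq <| not_disjoint_iff.2 ⟨f i, hf i, hij ▸ hf j⟩

theorem pairwise_disjoint_of_card_filter_mem_le_one [Fintype ι] [DecidableEq α]
    {S : ι → Finset α} (hS : ∀ a, #{i | a ∈ S i} ≤ 1) : Pairwise (Disjoint on S) :=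
  fun i j hij ↦ disjoint_left.2 fun a hi hj ↦
    hij <| card_le_one.1 (hS a) i ((mem_filter_univ i).2 hi) j ((mem_filter_univ j).2 hj)

variable [Fintype ι] [Fintype α]

theorem card_filter_embedding_forall_mem [DecidableEq α] {S : ι → Finset α}
    (hS : Pairwise (Disjoint on S)) :
    #{f : ι ↪ α | ∀ i, f i ∈ S i} = ∏ i, #(S i) := by
  classical
  have map_coe : ({f : ι ↪ α | ∀ i, f i ∈ S i} : Finset (ι ↪ α)).map
      ⟨DFunLike.coe, DFunLike.coe_injective⟩ = Fintype.piFinset S := by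
    ext g
    simp only [mem_map, mem_filter_univ, Embedding.coeFn_mk, Fintype.mem_piFinset]
    constructor
    · rintro ⟨f, hf, rfl⟩
      exact hf
    · exact fun hg ↦ ⟨⟨g, injective_of_mem_pairwise_disjoint hS hg⟩, hg, rfl⟩
  rw [← Fintype.card_piFinset, ← map_coe, card_map]

theorem card_filter_embedding_restrict_eq [DecidableEq α] (J : Finset ι) (f : J ↪ α) :
    #{σ : ι ↪ α | (Embedding.subtype (· ∈ J)).trans σ = f} =
      (Fintype.card α - #J).descFactorial (Fintype.card ι - #J) := by
  classical
  let split : (ι ↪ α) ≃ Σ g : J ↪ α, {i // i ∉ J} ↪ ↥(Set.range g)ᶜ :=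
    (Equiv.embeddingCongr (Equiv.sumCompl (· ∈ J)).symm (Equiv.refl α)).trans
      Equiv.sumEmbeddingEquivSigmaEmbeddingRestricted
  have split_fst (σ : ι ↪ α) : (split σ).1 = (Embedding.subtype (· ∈ J)).trans σ := rfl
  let extensions : {σ : ι ↪ α // (Embedding.subtype (· ∈ J)).trans σ = f} ≃
      ({i // i ∉ J} ↪ ↥(Set.range f)ᶜ) :=
    (split.subtypeEquiv fun σ ↦ by rw [split_fst]).trans (Equiv.sigmaSubtype f)
  rw [← Fintype.card_subtype, Fintype.card_congr extensions, Fintype.card_embedding_eq,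
    Fintype.card_compl_set, Set.card_range_of_injective f.injective, Fintype.card_coe,
    Fintype.card_subtype_compl, Fintype.card_coe]

theorem card_filter_embedding_restrict (J : Finset ι) (P : (J ↪ α) → Prop) [DecidablePred P] :
    #{σ : ι ↪ α | P ((Embedding.subtype (· ∈ J)).trans σ)} =
      #{f | P f} * (Fintype.card α - #J).descFactorial (Fintype.card ι - #J) := by
  classical
  have card_fiber (f : J ↪ α) (hf : f ∈ ({f | P f} : Finset (J ↪ α))) :
      #{σ ∈ {σ : ι ↪ α | P ((Embedding.subtype (· ∈ J)).trans σ)} |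
          (Embedding.subtype (· ∈ J)).trans σ = f} =
        (Fintype.card α - #J).descFactorial (Fintype.card ι - #J) := by
    rw [← card_filter_embedding_restrict_eq J f, filter_filter]
    refine congrArg card <| filter_congr fun σ _ ↦ and_iff_right_of_imp ?_
    rintro rfl
    exact (mem_filter_univ _).1 hf
  rw [card_eq_sum_card_fiberwise (t := {f | P f}) fun σ hσ ↦ ?_, sum_const_nat card_fiber]
  simpa using hσ

theorem stmt7_general [DecidableEq α] {S : ι → Finset α} {J : Finset ι}
    (hS : (J : Set ι).PairwiseDisjoint S) :
    #{σ : ι ↪ α | ∀ i ∈ J, σ i ∈ S i} =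
      (∏ i ∈ J, #(S i)) * (Fintype.card α - #J).descFactorial (Fintype.card ι - #J) := by
  have hSJ : Pairwise (Disjoint on fun i : J ↦ S i) := fun i j hij ↦
    hS i.2 j.2 (Subtype.coe_injective.ne hij)
  rw [← prod_coe_sort, ← card_filter_embedding_forall_mem hSJ, ← card_filter_embedding_restrict]
  simp only [Embedding.trans_apply, Embedding.subtype_apply, Subtype.forall]

end

/-- For a `k × n` ±1 matrix `B = B_{n_1,…,n_k}` (every column contains at most one `-1`,
row `i` contains exactly `n_i` entries equal to `-1`, `n_1 + ⋯ + n_k ≤ n`, `k ≤ n`)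
and any `J ⊆ [k]`, the number of injections `σ : [k] ↪ [n]` with `B_{i,σ(i)} = −1`
for all `i ∈ J` equals `(Π_{i∈J} n_i) · (n−|J|)_{k−|J|}`. -/
theorem stmt7 (k n : ℕ) (hkn : k ≤ n) (nv : Fin k → ℕ) (hsum : ∑ i, nv i ≤ n)
    (B : Matrix (Fin k) (Fin n) ℝ)
    (hpm : ∀ i j, B i j = 1 ∨ B i j = -1)
    (hcol : ∀ j, (Finset.univ.filter fun i => B i j = -1).card ≤ 1)
    (hrow : ∀ i, (Finset.univ.filter fun j => B i j = -1).card = nv i)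
    (J : Finset (Fin k)) :
    (Finset.univ.filter fun σ : Fin k ↪ Fin n => ∀ i ∈ J, B i (σ i) = -1).card =
      (∏ i ∈ J, nv i) * Nat.descFactorial (n - J.card) (k - J.card) := by
  simpa only [Finset.mem_filter_univ, hrow, Fintype.card_fin] using
    stmt7_general (S := fun i ↦ {j | B i j = -1}) (J := J)
      ((pairwise_disjoint_of_card_filter_mem_le_one (by simpa using hcol)).set_pairwise _)
end

section
/- Let k+1 ≤ n, let n_1,…,n_k be positive integers with n_1+⋯+n_k ≤ n, and let B = B_{n_1,…,n_k}, arranged so that its first n_0 = n−(n_1+⋯+n_k) columns consist entirely of ones. For 1 ≤ i ≤ k set p_i = per(B_{n_1,…,n_{i−1},n_i−1,n_{i+1},…,n_k}) (a permanent of a k×(n−1) matrix). Then for every ε ∈ {0,1}^n with ε_j = 0 for all j ≤ n_0, writing x_i = #{j : ε_j = 1 and B_{i,j} = −1}, one has per(ε ∗ B) = Σ_{i=1}^{k} p_i · x_i. Consequently the set {per(ε ∗ B) : ε ∈ {0,1}^n} contains the generalized arithmetic progression {Σ_{i=1}^{k} p_i x_i : 0 ≤ x_i ≤ n_i for all i}.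 -/
/-!
Expand `per(ε ∗ B)` along its first row: the coefficient of `ε_j` is the permanent of `B` with
column `j` deleted. The permanent is invariant under permutations of the columns, and a matrix of
type `B_{n_1,…,n_k}` is determined by its type up to such a permutation, so when the `-1` of column
`j` lies in row `i` this coefficient is `p_i`, independently of `j`. Grouping the columns according
to the position of their `-1` gives the formula, and the groups can be filled independently.
-/

open Finset

section Counting

variable {α β γ : Type*} [Fintype α] [Fintype β] [DecidableEq γ]

theorem exists_equiv_comp_eq_of_card_fiber_eq {f : α → γ} {g : β → γ}
    (h : ∀ c, #{a | f a = c} = #{b | g b = c}) : ∃ t : α ≃ β, g ∘ t = f := by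
  have fiberEquiv (c : γ) : Nonempty ({a // f a = c} ≃ {b // g b = c}) :=
    Fintype.card_eq.mp <| by rw [Fintype.card_subtype, Fintype.card_subtype, h c]
  exact ⟨.ofFiberEquiv fun c => (fiberEquiv c).some, funext <| Equiv.ofFiberEquiv_map _⟩

theorem card_fiber_none_add_sum_card_fiber_some [Fintype γ] (c : α → Option γ) :
    #{a | c a = none} + ∑ i, #{a | c a = some i} = Fintype.card α := by
  rw [← Fintype.sum_option (fun o => #{a | c a = o}), ← card_univ]
  exact (card_eq_sum_card_fiberwise fun _ _ => mem_coe.mpr (mem_univ _)).symm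

theorem sum_filter_eq_card_of_eq_zero_or_eq_one {e : α → ℝ} (he : ∀ a, e a = 0 ∨ e a = 1)
    (q : α → Prop) [DecidablePred q] : ∑ a with q a, e a = #{a | e a = 1 ∧ q a} := by
  have he' (a : α) : e a = if e a = 1 then 1 else 0 := by
    rcases he a with h | h <;> simp [h]
  rw [sum_congr rfl fun a _ => he' a, sum_boole, filter_filter]
  simp only [and_comm]

end Counting

section Permanent

theorem rperm_submatrix_equiv {k k' n n' : ℕ} (A : Matrix (Fin k') (Fin n') ℝ)
    (s : Fin k ≃ Fin k') (t : Fin n ≃ Fin n') : rperm (A.submatrix s t) = rperm A := by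
  refine Fintype.sum_equiv (s.embeddingCongr t) _ _ fun σ => ?_
  exact Fintype.prod_equiv s _ _ fun i => by simp

variable {k m : ℕ}

/-- The bijection between an injective tuple of length `k + 1` in `Fin (m + 1)` and its first entry
together with its remaining entries, renumbered as elements of `Fin m` by skipping the first one.
It indexes the expansion of a permanent along its first row. -/
noncomputable def consSuccAboveEquiv :
    Fin (m + 1) × (Fin k ↪ Fin m) ≃ (Fin (k + 1) ↪ Fin (m + 1)) :=
  Equiv.ofBijective
    (fun q => Fin.Embedding.cons (q.2.trans q.1.succAboveEmb) (a := q.1) (by simp)) <| by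
    constructor
    · rintro ⟨j, σ⟩ ⟨j', σ'⟩ h
      have hcons : (Fin.cons j (j.succAbove ∘ σ) : Fin (k + 1) → Fin (m + 1)) =
          Fin.cons j' (j'.succAbove ∘ σ') := congrArg DFunLike.coe h
      obtain ⟨rfl, htail⟩ := Fin.cons_inj.mp hcons
      rw [DFunLike.coe_injective (j.succAbove_right_injective.comp_left htail)]
    · intro σ
      have hne (i : Fin k) : σ i.succ ≠ σ 0 := σ.injective.ne i.succ_ne_zero
      choose τ hτ using fun i => Fin.exists_succAbove_eq (hne i)
      have hinj : Function.Injective τ := fun a b hab =>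
        Fin.succ_injective _ (σ.injective (by rw [← hτ, ← hτ, hab]))
      exact ⟨(σ 0, ⟨τ, hinj⟩), DFunLike.ext _ _ (Fin.cases rfl hτ)⟩

theorem rperm_succ_row_zero (A : Matrix (Fin (k + 1)) (Fin (m + 1)) ℝ) :
    rperm A = ∑ j, A 0 j * rperm (A.submatrix Fin.succ j.succAbove) := by
  simp only [rperm, mul_sum]
  rw [← Fintype.sum_prod_type', ← consSuccAboveEquiv.sum_comp]
  exact sum_congr rfl fun q _ => Fin.prod_univ_succ _

end Permanent

/-- `IsSignMatrix A r` says that `A` is of type `B_{r_1,…,r_k}`: its entries are `±1`, every column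
has at most one entry `-1`, and the `i`-th row has exactly `r i` of them. -/
structure IsSignMatrix {ι κ : Type*} [Fintype ι] [Fintype κ] (A : Matrix ι κ ℝ) (r : ι → ℕ) :
    Prop where
  eq_one_or_eq_neg_one : ∀ i j, A i j = 1 ∨ A i j = -1
  card_col_le_one : ∀ j, #{i | A i j = -1} ≤ 1
  card_row : ∀ i, #{j | A i j = -1} = r i

open Classical in
/-- The row in which column `j` of `A` has an entry `-1`, or `none` if there is no such row. On a
matrix of type `B_{n_1,…,n_k}` this is the only possible choice, and it determines the column. -/
noncomputable def negRow {ι κ : Type*} (A : Matrix ι κ ℝ) (j : κ) : Option ι :=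
  if h : ∃ i, A i j = -1 then some h.choose else none

namespace IsSignMatrix

variable {ι κ : Type*} [Fintype ι] [Fintype κ] {A B : Matrix ι κ ℝ} {r : ι → ℕ}

theorem ne_neg_one_iff (hA : IsSignMatrix A r) {i : ι} {j : κ} : A i j ≠ -1 ↔ A i j = 1 := by
  rcases hA.eq_one_or_eq_neg_one i j with h | h <;> norm_num [h]

theorem eq_of_eq_neg_one (hA : IsSignMatrix A r) {i i' : ι} {j : κ} (h : A i j = -1)
    (h' : A i' j = -1) : i = i' :=
  card_le_one.mp (hA.card_col_le_one j) i (by simpa using h) i' (by simpa using h')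

theorem negRow_eq_some_iff (hA : IsSignMatrix A r) {i : ι} {j : κ} :
    negRow A j = some i ↔ A i j = -1 := by
  unfold negRow
  split_ifs with h
  · rw [Option.some_inj]
    exact ⟨fun hi => hi ▸ h.choose_spec, hA.eq_of_eq_neg_one h.choose_spec⟩
  · simpa using fun hi => h ⟨i, hi⟩

theorem negRow_eq_none_iff (hA : IsSignMatrix A r) {j : κ} :
    negRow A j = none ↔ ∀ i, A i j = 1 := by
  simp only [Option.eq_none_iff_forall_ne_some, ne_eq, hA.negRow_eq_some_iff, ← hA.ne_neg_one_iff]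

theorem card_one_cols_add_sum [DecidablePred fun j => ∀ i, A i j = 1] (hA : IsSignMatrix A r) :
    #{j | ∀ i, A i j = 1} + ∑ i, r i = Fintype.card κ := by
  classical
  rw [← card_fiber_none_add_sum_card_fiber_some (negRow A)]
  simp only [hA.negRow_eq_none_iff, hA.negRow_eq_some_iff, hA.card_row]

theorem exists_perm_submatrix_eq (hA : IsSignMatrix A r) (hB : IsSignMatrix B r) :
    ∃ t : Equiv.Perm κ, B.submatrix id t = A := by
  classical
  have hfiber (o : Option ι) : #{j | negRow A j = o} = #{j | negRow B j = o} := by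
    cases o with
    | none =>
      simp only [hA.negRow_eq_none_iff, hB.negRow_eq_none_iff]
      exact Nat.add_right_cancel (hA.card_one_cols_add_sum.trans hB.card_one_cols_add_sum.symm)
    | some i =>
      simp only [hA.negRow_eq_some_iff, hB.negRow_eq_some_iff, hA.card_row, hB.card_row]
  obtain ⟨t, ht⟩ := exists_equiv_comp_eq_of_card_fiber_eq hfiber
  refine ⟨t, Matrix.ext fun i j => ?_⟩
  have hneg : B i (t j) = -1 ↔ A i j = -1 := by
    rw [← hA.negRow_eq_some_iff, ← hB.negRow_eq_some_iff, ← ht, Function.comp_apply]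
  rcases hA.eq_one_or_eq_neg_one i j with h | h
  · rw [Matrix.submatrix_apply, id, h, ← hB.ne_neg_one_iff, ne_eq, hneg]
    exact hA.ne_neg_one_iff.mpr h
  · rw [Matrix.submatrix_apply, id, h, hneg.mpr h]

theorem exists_indicator_sum_eq (hA : IsSignMatrix A r) {x : ι → ℕ} (hx : ∀ i, x i ≤ r i) :
    ∃ e : κ → ℝ, (∀ j, e j = 0 ∨ e j = 1) ∧ (∀ j, (∀ i, A i j = 1) → e j = 0) ∧
      ∀ i, ∑ j with A i j = -1, e j = x i := by
  classical
  choose S hS hcard using fun i => exists_subset_card_eq ((hx i).trans_eq (hA.card_row i).symm)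
  have hneg {i j} (hj : j ∈ S i) : A i j = -1 := by simpa using hS i hj
  have hunion {i j} (hj : A i j = -1) : (∃ i', j ∈ S i') ↔ j ∈ S i :=
    ⟨fun ⟨i', hj'⟩ => hA.eq_of_eq_neg_one hj (hneg hj') ▸ hj', fun hj' => ⟨i, hj'⟩⟩
  refine ⟨fun j => if ∃ i, j ∈ S i then 1 else 0, fun j => (ite_eq_or_eq _ _ _).symm,
    fun j hj => if_neg fun ⟨i, hi⟩ => hA.ne_neg_one_iff.mpr (hj i) (hneg hi), fun i => ?_⟩
  rw [sum_boole, filter_filter, ← hcard i]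
  congr 2
  ext j
  simpa using ⟨fun ⟨hj, hmem⟩ => (hunion hj).mp hmem, fun hj => ⟨hneg hj, i, hj⟩⟩

section Fin

variable {k n m : ℕ} {r : Fin k → ℕ}

theorem rperm_eq {A B : Matrix (Fin k) (Fin n) ℝ} (hA : IsSignMatrix A r)
    (hB : IsSignMatrix B r) : rperm A = rperm B := by
  obtain ⟨t, rfl⟩ := hA.exists_perm_submatrix_eq hB
  exact rperm_submatrix_equiv B (Equiv.refl _) t

theorem val_lt_of_forall_eq_one {A : Matrix (Fin k) (Fin n) ℝ} (hA : IsSignMatrix A r)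
    (hfirst : ∀ j : Fin n, (j : ℕ) < n - ∑ i, r i → ∀ i, A i j = 1) {j : Fin n}
    (hj : ∀ i, A i j = 1) : (j : ℕ) < n - ∑ i, r i := by
  have hsub : ({j | (j : ℕ) < n - ∑ i, r i} : Finset (Fin n)) ⊆
      ({j | ∀ i, A i j = 1} : Finset (Fin n)) :=
    monotone_filter_right _ fun j _ => hfirst j
  have hcard := hA.card_one_cols_add_sum
  rw [Fintype.card_fin] at hcard
  have hcols := eq_of_subset_of_card_le hsub (by rw [Fin.card_filter_val_lt]; omega)
  exact (mem_filter_univ j).mp (hcols.symm ▸ (mem_filter_univ j).mpr hj)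

variable {B : Matrix (Fin k) (Fin (m + 1)) ℝ}

theorem submatrix_succAbove (hB : IsSignMatrix B r) {i : Fin k} {j : Fin (m + 1)}
    (hij : B i j = -1) :
    IsSignMatrix (B.submatrix id j.succAbove) (Function.update r i (r i - 1)) where
  eq_one_or_eq_neg_one _ _ := hB.eq_one_or_eq_neg_one _ _
  card_col_le_one _ := hB.card_col_le_one _
  card_row i' := by
    have hrow : (if B i' j = -1 then 1 else 0) +
        #{l | B.submatrix id j.succAbove i' l = -1} = r i' := by
      rw [← hB.card_row i', card_filter _ univ, card_filter _ univ, Fin.sum_univ_succAbove _ j]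
      rfl
    rcases eq_or_ne i' i with rfl | hne
    · rw [if_pos hij] at hrow
      rw [Function.update_self]
      omega
    · rwa [if_neg fun h => hne (hB.eq_of_eq_neg_one h hij), zero_add,
        ← Function.update_of_ne hne (r i - 1) r] at hrow

theorem rperm_cons (hB : IsSignMatrix B r) {p : Fin k → ℝ}
    (hp : ∀ i j, B i j = -1 → rperm (B.submatrix id j.succAbove) = p i)
    {e : Fin (m + 1) → ℝ} (he : ∀ j, (∀ i, B i j = 1) → e j = 0) :
    rperm (Matrix.of (Fin.cons e B)) = ∑ i, p i * ∑ j with B i j = -1, e j := by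
  have hcol (j) : e j * rperm (B.submatrix id j.succAbove) =
      ∑ i, if B i j = -1 then p i * e j else 0 := by
    by_cases hone : ∀ i, B i j = 1
    · simp [he j hone]
    · obtain ⟨i, hi⟩ : ∃ i, B i j = -1 := by
        simpa only [not_forall, ← hB.ne_neg_one_iff, not_not] using hone
      rw [Fintype.sum_eq_single i fun i' hne => if_neg fun hi' => hne (hB.eq_of_eq_neg_one hi' hi),
        if_pos hi, hp i j hi, mul_comm]
  calc rperm (Matrix.of (Fin.cons e B))
      = ∑ j, e j * rperm (B.submatrix id j.succAbove) := rperm_succ_row_zero _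
    _ = ∑ i, ∑ j, if B i j = -1 then p i * e j else 0 := by
      rw [sum_comm]; exact sum_congr rfl fun j _ => hcol j
    _ = ∑ i, p i * ∑ j with B i j = -1, e j := by simp only [sum_filter, mul_sum, mul_ite, mul_zero]

end Fin

end IsSignMatrix

theorem stmt9_general {k m : ℕ} {nv : Fin k → ℕ} {B : Matrix (Fin k) (Fin (m + 1)) ℝ}
    (hB : IsSignMatrix B nv) {p : Fin k → ℝ}
    (hp : ∀ i, 0 < nv i → ∃ C : Matrix (Fin k) (Fin m) ℝ,
      IsSignMatrix C (Function.update nv i (nv i - 1)) ∧ rperm C = p i) :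
    (∀ e : Fin (m + 1) → ℝ, (∀ j, (∀ i, B i j = 1) → e j = 0) →
      rperm (Matrix.of (Fin.cons e B)) = ∑ i, p i * ∑ j with B i j = -1, e j) ∧
    (∀ x : Fin k → ℕ, (∀ i, x i ≤ nv i) →
      ∃ e : Fin (m + 1) → ℝ, (∀ j, e j = 0 ∨ e j = 1) ∧
        rperm (Matrix.of (Fin.cons e B)) = ∑ i, p i * (x i : ℝ)) := by
  have hminor (i j) (hij : B i j = -1) : rperm (B.submatrix id j.succAbove) = p i := by
    have hrow : 0 < nv i := hB.card_row i ▸ card_pos.mpr ⟨j, (mem_filter_univ j).mpr hij⟩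
    obtain ⟨C, hC, hCp⟩ := hp i hrow
    rw [← hCp, (hB.submatrix_succAbove hij).rperm_eq hC]
  refine ⟨fun e he => hB.rperm_cons hminor he, fun x hx => ?_⟩
  obtain ⟨e, he01, he, hsum⟩ := hB.exists_indicator_sum_eq hx
  exact ⟨e, he01, by simp only [hB.rperm_cons hminor he, hsum]⟩

/-- Let `k + 1 ≤ n`, let `n_1,…,n_k` be positive with `n_1+⋯+n_k ≤ n`, and let `B`
be a matrix of type `B_{n_1,…,n_k}` whose first `n_0 = n − Σ n_i` columns are all ones.
Let `p_i` be the permanent of (any) `k × (n−1)` matrix of type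
`B_{n_1,…,n_i−1,…,n_k}`. Then for every `ε ∈ {0,1}^n` vanishing on the first `n_0`
coordinates, `per(ε ∗ B) = Σ_i p_i x_i` where
`x_i = #{j : ε_j = 1 ∧ B_{i,j} = −1}`; consequently `{per(ε ∗ B) : ε ∈ {0,1}^n}`
contains the GAP `{Σ_i p_i x_i : 0 ≤ x_i ≤ n_i}`. -/
theorem stmt9 (k n : ℕ) (hkn : k + 1 ≤ n) (nv : Fin k → ℕ) (hpos : ∀ i, 1 ≤ nv i)
    (hsum : ∑ i, nv i ≤ n)
    (B : Matrix (Fin k) (Fin n) ℝ)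
    (hpm : ∀ i j, B i j = 1 ∨ B i j = -1)
    (hcol : ∀ j, (Finset.univ.filter fun i => B i j = -1).card ≤ 1)
    (hrow : ∀ i, (Finset.univ.filter fun j => B i j = -1).card = nv i)
    (hfirst : ∀ j : Fin n, (j : ℕ) < n - ∑ i, nv i → ∀ i, B i j = 1)
    (p : Fin k → ℝ)
    (hp : ∀ i : Fin k, ∃ C : Matrix (Fin k) (Fin (n - 1)) ℝ,
      (∀ i' j, C i' j = 1 ∨ C i' j = -1) ∧
      (∀ j, (Finset.univ.filter fun i' => C i' j = -1).card ≤ 1) ∧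
      (∀ i', (Finset.univ.filter fun j => C i' j = -1).card
          = Function.update nv i (nv i - 1) i') ∧
      rperm C = p i) :
    (∀ e : Fin n → ℝ, (∀ j, e j = 0 ∨ e j = 1) →
      (∀ j : Fin n, (j : ℕ) < n - ∑ i, nv i → e j = 0) →
      rperm (Matrix.of (Fin.cons e B)) =
        ∑ i, p i * ((Finset.univ.filter fun j => e j = 1 ∧ B i j = -1).card : ℝ)) ∧
    (∀ x : Fin k → ℕ, (∀ i, x i ≤ nv i) →
      ∃ e : Fin n → ℝ, (∀ j, e j = 0 ∨ e j = 1) ∧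
        rperm (Matrix.of (Fin.cons e B)) = ∑ i, p i * (x i : ℝ)) := by
  obtain ⟨m, rfl⟩ : ∃ m, n = m + 1 := ⟨n - 1, by omega⟩
  have hB : IsSignMatrix B nv := ⟨hpm, hcol, hrow⟩
  obtain ⟨hper, hgap⟩ := stmt9_general hB fun i _ =>
    (hp i).imp fun C ⟨hpm', hcol', hrow', hC⟩ => ⟨⟨hpm', hcol', hrow'⟩, hC⟩
  refine ⟨fun e he he0 => ?_, hgap⟩
  rw [hper e fun j hj => he0 j (hB.val_lt_of_forall_eq_one hfirst hj)]
  simp only [sum_filter_eq_card_of_eq_zero_or_eq_one he]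
end

section
/- Fix an integer k ≥ 2, rationals μ_1,…,μ_k, and a rational n_0. For 1 ≤ i ≤ k define the polynomial p̄_i ∈ ℚ[n] by p̄_i(n) = Σ_{ℓ=0}^{k} (−2)^ℓ (n−1−ℓ)_{k−ℓ} · e_ℓ(μ_1(n−n_0),…,μ_{i−1}(n−n_0), μ_i(n−n_0)−1, μ_{i+1}(n−n_0),…,μ_k(n−n_0)), where (m)_j = m(m−1)⋯(m−j+1). Then for every 2 ≤ i ≤ k, p̄_1(n) − p̄_i(n) = (μ_1 − μ_i) · Σ_{ℓ=2}^{k} (−2)^ℓ (n−1−ℓ)_{k−ℓ} (n−n_0)^{ℓ−1} · e_{ℓ−2}(μ_2,…,μ_{i−1},μ_{i+1},…,μ_k), as an identity of polynomials in n. -/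
/-!
Write `y m = μ m * (n - n0)`. Passing from `pbar k μ n0 a` to `pbar k μ n0 i` replaces the two
variables `y a - 1, y i` by `y a, y i - 1` and leaves the others alone. The sum of the pair is
unchanged and its product changes by `y a - y i`. Since an elementary symmetric function depends on
two of its variables `u, v` only through `u + v` and `u * v`, with `u * v` entering as
`u * v * e_{ℓ-2}(others)`, the ℓ-th one changes by `(y a - y i) * e_{ℓ-2}(others)`.
-/

open Polynomial

/-- `pbar k μ n0 i` is the polynomial
`p̄_i(n) = Σ_{ℓ=0}^{k} (−2)^ℓ (n−1−ℓ)_{k−ℓ} ·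
  e_ℓ(μ_1(n−n_0),…,μ_i(n−n_0)−1,…,μ_k(n−n_0)) ∈ ℚ[n]`,
where `(n−1−ℓ)_{k−ℓ} = Π_{t=0}^{k−ℓ−1} (n−1−ℓ−t)`. -/
noncomputable def pbar (k : ℕ) (μ : Fin k → ℚ) (n0 : ℚ) (i : Fin k) : ℚ[X] :=
  ∑ l ∈ Finset.range (k + 1),
    (-2 : ℚ[X]) ^ l *
      (∏ t ∈ Finset.range (k - l), (X - C ((1 + l + t : ℕ) : ℚ))) *
      ∑ S ∈ Finset.powersetCard l (Finset.univ : Finset (Fin k)),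
        ∏ m ∈ S, (C (μ m) * (X - C n0) - if m = i then 1 else 0)

variable {σ R : Type*}

section CommSemiring

variable [CommSemiring R]

theorem esymm_zero (s : Multiset R) : s.esymm 0 = 1 := by
  simp [Multiset.esymm]

theorem esymm_cons_succ (u : R) (s : Multiset R) (l : ℕ) :
    (u ::ₘ s).esymm (l + 1) = s.esymm (l + 1) + u * s.esymm l := by
  simp only [Multiset.esymm, Multiset.powersetCard_cons, Multiset.map_add, Multiset.map_map,
    Function.comp_def, Multiset.prod_cons, Multiset.sum_add, Multiset.sum_map_mul_left]

theorem esymm_cons_cons_one (u v : R) (s : Multiset R) :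
    (u ::ₘ v ::ₘ s).esymm 1 = s.esymm 1 + (u + v) := by
  simp only [esymm_cons_succ _ _ 0, esymm_zero]
  ring

theorem esymm_cons_cons_add_two (u v : R) (s : Multiset R) (l : ℕ) :
    (u ::ₘ v ::ₘ s).esymm (l + 2) =
      s.esymm (l + 2) + (u + v) * s.esymm (l + 1) + u * v * s.esymm l := by
  simp only [esymm_cons_succ]
  ring

theorem esymm_map_C_mul (s : Finset σ) (μ : σ → R) (p : R[X]) (l : ℕ) :
    (s.val.map fun m => C (μ m) * p).esymm l =
      p ^ l * C (∑ S ∈ Finset.powersetCard l s, ∏ m ∈ S, μ m) := by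
  have hmap : (s.val.map fun m => C (μ m) * p) = (s.val.map fun m => C (μ m)).map (p • ·) := by
    simp only [Multiset.map_map, Function.comp_def, smul_eq_mul, mul_comm p]
  rw [hmap, ← Multiset.pow_smul_esymm, Finset.esymm_map_val, smul_eq_mul]
  simp only [map_sum, map_prod]

end CommSemiring

section CommRing

variable [CommRing R]

theorem sum_mul_esymm_cons_cons_sub {u v u' v' : R} (h : u + v = u' + v') (s : Multiset R)
    (w : ℕ → R) (k : ℕ) :
    ∑ l ∈ Finset.range (k + 1), w l * (u ::ₘ v ::ₘ s).esymm l -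
        ∑ l ∈ Finset.range (k + 1), w l * (u' ::ₘ v' ::ₘ s).esymm l =
      (u * v - u' * v') * ∑ l ∈ Finset.Icc 2 k, w l * s.esymm (l - 2) := by
  have hsub : Finset.Icc 2 k ⊆ Finset.range (k + 1) := fun l hl => by
    simp only [Finset.mem_Icc, Finset.mem_range] at hl ⊢
    omega
  rw [← Finset.sum_sub_distrib, Finset.mul_sum]
  refine (Finset.sum_subset_zero_on_sdiff hsub (fun l hl => ?_) fun l hl => ?_).symm
  · obtain rfl | rfl : l = 0 ∨ l = 1 := by
      simp only [Finset.mem_sdiff, Finset.mem_range, Finset.mem_Icc] at hl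
      omega
    · simp only [esymm_zero, sub_self]
    · simp only [esymm_cons_cons_one, h, sub_self]
  · obtain ⟨l, rfl⟩ := Nat.exists_eq_add_of_le' (Finset.mem_Icc.1 hl).1
    simp only [esymm_cons_cons_add_two, h, Nat.add_sub_cancel]
    ring

variable [DecidableEq σ]

theorem map_sub_ite_eq_cons_cons {s : Finset σ} {a b : σ} (ha : a ∈ s) (hb : b ∈ s) (hab : a ≠ b)
    (y : σ → R) :
    s.val.map (fun m => y m - if m = a then 1 else 0) =
      (y a - 1) ::ₘ y b ::ₘ ((s.erase a).erase b).val.map y := by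
  have hb' : b ∈ s.erase a := Finset.mem_erase.2 ⟨hab.symm, hb⟩
  have hrest : ((s.erase a).erase b).val.map (fun m => y m - if m = a then 1 else 0) =
      ((s.erase a).erase b).val.map y := Multiset.map_congr rfl fun m hm => by
    have hma : m ≠ a := Finset.ne_of_mem_erase (Finset.mem_of_mem_erase hm)
    rw [if_neg hma, sub_zero]
  rw [← Multiset.cons_erase ha, Multiset.map_cons, ← Finset.erase_val,
    ← Multiset.cons_erase hb', Multiset.map_cons, ← Finset.erase_val, hrest, if_pos rfl,
    if_neg hab.symm, sub_zero]

theorem sum_mul_esymm_map_sub_ite_sub {s : Finset σ} {a b : σ} (ha : a ∈ s) (hb : b ∈ s)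
    (y : σ → R) (w : ℕ → R) (k : ℕ) :
    ∑ l ∈ Finset.range (k + 1), w l * (s.val.map fun m => y m - if m = a then 1 else 0).esymm l -
        ∑ l ∈ Finset.range (k + 1),
          w l * (s.val.map fun m => y m - if m = b then 1 else 0).esymm l =
      (y a - y b) *
        ∑ l ∈ Finset.Icc 2 k, w l * (((s.erase a).erase b).val.map y).esymm (l - 2) := by
  obtain rfl | hab := eq_or_ne a b
  · simp only [sub_self, zero_mul]
  rw [map_sub_ite_eq_cons_cons ha hb hab, map_sub_ite_eq_cons_cons hb ha hab.symm,
    Finset.erase_right_comm (a := b),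
    sum_mul_esymm_cons_cons_sub (show y a - 1 + y b = y b - 1 + y a by ring)]
  ring

end CommRing

theorem stmt11_general (k : ℕ) (μ : Fin k → ℚ) (n0 : ℚ) (a i : Fin k) :
    pbar k μ n0 a - pbar k μ n0 i =
      C (μ a - μ i) *
        ∑ l ∈ Finset.Icc 2 k,
          (-2 : ℚ[X]) ^ l *
            (∏ t ∈ Finset.range (k - l), (X - C ((1 + l + t : ℕ) : ℚ))) *
            (X - C n0) ^ (l - 1) *
            C (∑ S ∈ Finset.powersetCard (l - 2) ((Finset.univ.erase a).erase i),
                ∏ m ∈ S, μ m) := by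
  simp only [pbar, ← Finset.esymm_map_val]
  rw [sum_mul_esymm_map_sub_ite_sub (Finset.mem_univ a) (Finset.mem_univ i)
      (fun m => C (μ m) * (X - C n0)), ← sub_mul, ← C_sub, mul_assoc, Finset.mul_sum]
  refine congrArg _ (Finset.sum_congr rfl fun l hl => ?_)
  have hpow : (X - C n0) * (X - C n0) ^ (l - 2) = (X - C n0) ^ (l - 1) := by
    rw [← pow_succ', show l - 2 + 1 = l - 1 by grind]
  rw [esymm_map_C_mul, Finset.esymm_map_val, ← hpow]
  ring

/-- For `k ≥ 2`, rationals `μ_1,…,μ_k`, a rational `n_0`, and `2 ≤ i ≤ k`,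
`p̄_1 − p̄_i = (μ_1 − μ_i) Σ_{ℓ=2}^{k} (−2)^ℓ (n−1−ℓ)_{k−ℓ} (n−n_0)^{ℓ−1}
  e_{ℓ−2}(μ_2,…,μ_{i−1},μ_{i+1},…,μ_k)` as polynomials in `n`. -/
theorem stmt11 (k : ℕ) (hk : 2 ≤ k) (μ : Fin k → ℚ) (n0 : ℚ)
    (i : Fin k) (hi : 1 ≤ (i : ℕ)) :
    pbar k μ n0 ⟨0, by omega⟩ - pbar k μ n0 i =
      C (μ ⟨0, by omega⟩ - μ i) *
        ∑ l ∈ Finset.Icc 2 k,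
          (-2 : ℚ[X]) ^ l *
            (∏ t ∈ Finset.range (k - l), (X - C ((1 + l + t : ℕ) : ℚ))) *
            (X - C n0) ^ (l - 1) *
            C (∑ S ∈ Finset.powersetCard (l - 2)
                  ((Finset.univ.erase (⟨0, by omega⟩ : Fin k)).erase i),
                ∏ m ∈ S, μ m) :=
  stmt11_general k μ n0 ⟨0, by omega⟩ i
end

section
/- Fix an integer k ≥ 2, pairwise distinct rationals μ_1,…,μ_k, and an integer n_0, and define p̄_i ∈ ℚ[n] for 1 ≤ i ≤ k by p̄_i(n) = Σ_{ℓ=0}^{k} (−2)^ℓ (n−1−ℓ)_{k−ℓ} · e_ℓ(μ_1(n−n_0),…,μ_i(n−n_0)−1,…,μ_k(n−n_0)). Then already the k−1 difference polynomials p̄_1 − p̄_i, for 2 ≤ i ≤ k, span a ℚ-linear subspace of ℚ[n] of dimension at least k−2. -/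
open Polynomial

/-!
Let `v = n - n₀`. The generating product `∏ m, (X + μ_m v)` turns the difference `p̄_1 - p̄_i` into
`(μ_1 - μ_i) Σ_j e_j(μ_m : m ≠ 1, i) g_j`, where `g_j = (-2)^(j+2) (n-3-j)_{k-2-j} v^(j+1)` for
`0 ≤ j ≤ k-2` does not depend on `i`. The numbers `e_j(μ_m : m ≠ 1, i)` are the coefficients of the
numerators of the Lagrange basis at the nodes `-μ_i`, `i ≠ 1`, so that all the `g_j` lie in the span
of the differences. The order of vanishing of `g_j` at `n₀` is `j + 1`, or `j + 2` if `n₀` is a root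
of `(n-3-j)_{k-2-j}`, which happens for an initial segment of indices `j`. Leaving out the first
index after this segment makes the orders distinct, and the remaining `k - 2` of the `g_j` are
linearly independent.
-/

section WeightedCoeffSum

variable {R A ι : Type*} [CommRing R] [CommRing A] [Algebra R A]

/-- The linear functional `P ↦ ∑ l ≤ n, (coefficient of X ^ (n - l) in P) • w l`. On a product of
`n` factors `X + y_m` it is the sum `∑ l ≤ n, e_l(y) • w l`, with weights in an `R`-algebra `A`. -/
noncomputable def weightedCoeffSum (n : ℕ) (w : ℕ → A) : R[X] →ₗ[R] A :=
  ∑ l ∈ Finset.range (n + 1), (lcoeff R (n - l)).smulRight (w l)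

lemma weightedCoeffSum_apply (n : ℕ) (w : ℕ → A) (P : R[X]) :
    weightedCoeffSum n w P = ∑ l ∈ Finset.range (n + 1), P.coeff (n - l) • w l := by
  simp [weightedCoeffSum]

lemma weightedCoeffSum_X_pow {n j : ℕ} (hj : j ≤ n) (w : ℕ → A) :
    weightedCoeffSum n w (X ^ (n - j) : R[X]) = w j := by
  rw [weightedCoeffSum_apply, Finset.sum_eq_single_of_mem j (by simpa [Nat.lt_succ_iff] using hj)]
  · simp
  · intro l hl hlj
    rw [Finset.mem_range] at hl
    rw [coeff_X_pow, if_neg (by omega), zero_smul]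

lemma mul_weightedCoeffSum (a : A) (n : ℕ) (w : ℕ → A) (P : R[X]) :
    a * weightedCoeffSum n w P = weightedCoeffSum n (fun l => a * w l) P := by
  simp only [weightedCoeffSum_apply, Finset.mul_sum, mul_smul_comm]

lemma weightedCoeffSum_add_of_natDegree_le {n : ℕ} {P : R[X]} (hP : P.natDegree ≤ n) (d : ℕ)
    (w : ℕ → A) :
    weightedCoeffSum (n + d) w P = weightedCoeffSum n (fun l => w (l + d)) P := by
  have hlow : ∑ l ∈ Finset.range d, P.coeff (n + d - l) • w l = 0 :=
    Finset.sum_eq_zero fun l hl => by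
      rw [Finset.mem_range] at hl
      rw [coeff_eq_zero_of_natDegree_lt (by omega), zero_smul]
  simp only [weightedCoeffSum_apply]
  rw [show n + d + 1 = d + (n + 1) by omega, Finset.sum_range_add, hlow, zero_add]
  refine Finset.sum_congr rfl fun l _ => ?_
  rw [add_comm d l, Nat.add_sub_add_right]

lemma weightedCoeffSum_prod_X_add_C (s : Finset ι) (y : ι → R) (w : ℕ → A) :
    weightedCoeffSum s.card w (∏ m ∈ s, (X + C (y m))) =
      ∑ l ∈ Finset.range (s.card + 1), (∑ S ∈ s.powersetCard l, ∏ m ∈ S, y m) • w l := by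
  rw [weightedCoeffSum_apply]
  refine Finset.sum_congr rfl fun l hl => ?_
  rw [Finset.prod_X_add_C_coeff _ _ (Nat.sub_le _ _),
    Nat.sub_sub_self (Nat.lt_succ_iff.1 (Finset.mem_range.1 hl))]

lemma weightedCoeffSum_prod_X_add_C_smul (s : Finset ι) (y : ι → R) (a : A) (w : ℕ → A) :
    weightedCoeffSum s.card w (∏ m ∈ s, (X + C (y m • a))) =
      weightedCoeffSum s.card (fun l => a ^ l * w l) (∏ m ∈ s, (X + C (y m))) := by
  simp only [weightedCoeffSum_prod_X_add_C]
  refine Finset.sum_congr rfl fun l _ => ?_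
  have hpow : ∀ S ∈ s.powersetCard l, ∏ m ∈ S, y m • a = (∏ m ∈ S, y m) • a ^ l := fun S hS => by
    rw [Finset.prod_smul, Finset.prod_const, (Finset.mem_powersetCard.1 hS).2]
  rw [Finset.sum_congr rfl hpow, ← Finset.sum_smul, smul_eq_mul, smul_mul_assoc]

end WeightedCoeffSum

section Products

variable {ι A : Type*} [DecidableEq ι] [CommRing A]

lemma prod_sub_ite_one_zero {s : Finset ι} {i : ι} (hi : i ∈ s) (z : ι → A) :
    ∏ m ∈ s, (z m - if m = i then 1 else 0) = ∏ m ∈ s, z m - ∏ m ∈ s.erase i, z m := by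
  have hne : ∏ m ∈ s.erase i, (z m - if m = i then 1 else 0) = ∏ m ∈ s.erase i, z m :=
    Finset.prod_congr rfl fun m hm => by rw [if_neg (Finset.ne_of_mem_erase hm), sub_zero]
  rw [← Finset.mul_prod_erase s _ hi, ← Finset.mul_prod_erase s z hi, hne, if_pos rfl]
  ring

lemma prod_sub_ite_sub_prod_sub_ite {s : Finset ι} {i j : ι} (hi : i ∈ s) (hj : j ∈ s)
    (hij : i ≠ j) (z : ι → A) :
    ∏ m ∈ s, (z m - if m = i then 1 else 0) - ∏ m ∈ s, (z m - if m = j then 1 else 0) =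
      (z i - z j) * ∏ m ∈ (s.erase i).erase j, z m := by
  rw [prod_sub_ite_one_zero hi, prod_sub_ite_one_zero hj, sub_sub_sub_cancel_left,
    ← Finset.mul_prod_erase (s.erase i) z (Finset.mem_erase.2 ⟨hij.symm, hj⟩),
    ← Finset.mul_prod_erase (s.erase j) z (Finset.mem_erase.2 ⟨hij, hi⟩),
    Finset.erase_right_comm, sub_mul]

end Products

section Lagrange

variable {F ι : Type*} [Field F] [DecidableEq ι]

lemma degreeLT_card_le_span_nodal_erase {s : Finset ι} {v : ι → F} (hv : Set.InjOn v s) :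
    degreeLT F s.card ≤ Submodule.span F ((fun i => Lagrange.nodal (s.erase i) v) '' s) := by
  intro P hP
  rw [Lagrange.eq_interpolate hv (mem_degreeLT.1 hP),
    Lagrange.interpolate_eq_nodalWeight_mul_nodal_div_X_sub_C]
  refine Submodule.sum_mem _ fun i hi => ?_
  rw [← Lagrange.nodal_erase_eq_nodal_div hi, mul_comm (C _), mul_assoc, ← map_mul, mul_comm,
    ← smul_eq_C_mul]
  exact Submodule.smul_mem _ _ (Submodule.subset_span (Set.mem_image_of_mem _ hi))

lemma weight_mem_span_weightedCoeffSum_nodal_erase {A : Type*} [CommRing A] [Algebra F A]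
    {s : Finset ι} {v : ι → F} (hv : Set.InjOn v s) {n j : ℕ} (hs : s.card = n + 1) (hj : j ≤ n)
    (w : ℕ → A) :
    w j ∈ Submodule.span F
      ((fun i => weightedCoeffSum n w (Lagrange.nodal (s.erase i) v)) '' s) := by
  have hX : (X ^ (n - j) : F[X]) ∈ degreeLT F s.card := by
    rw [mem_degreeLT, degree_X_pow, hs]
    exact_mod_cast Nat.lt_succ_of_le (Nat.sub_le n j)
  have hmap := Submodule.mem_map_of_mem (f := weightedCoeffSum n w)
    (degreeLT_card_le_span_nodal_erase hv hX)
  rwa [weightedCoeffSum_X_pow hj, Submodule.map_span, Set.image_image] at hmap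

end Lagrange

section RootMultiplicity

variable {R : Type*} [CommRing R] [IsDomain R]

lemma linearIndependent_of_injective_rootMultiplicity {ι : Type*} {p : ι → R[X]} {r : R}
    (hp : ∀ i, p i ≠ 0) (hinj : Function.Injective fun i => (p i).rootMultiplicity r) :
    LinearIndependent R p := by
  classical
  rw [linearIndependent_iff']
  intro s c hsum
  by_contra! hne
  obtain ⟨i₁, hi₁s, hi₁⟩ := hne
  obtain ⟨i₀, hi₀, hmin⟩ := Finset.exists_min_image {i ∈ s | c i ≠ 0}
    (fun i => (p i).rootMultiplicity r) ⟨i₁, Finset.mem_filter.2 ⟨hi₁s, hi₁⟩⟩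
  obtain ⟨hi₀s, hc₀⟩ := Finset.mem_filter.1 hi₀
  have hdvd_rest : (X - C r) ^ ((p i₀).rootMultiplicity r + 1) ∣ ∑ i ∈ s.erase i₀, c i • p i := by
    refine Finset.dvd_sum fun i hi => ?_
    obtain ⟨hne, his⟩ := Finset.mem_erase.1 hi
    rcases eq_or_ne (c i) 0 with hci | hci
    · simp [hci]
    · have hlt := (hmin i (Finset.mem_filter.2 ⟨his, hci⟩)).lt_of_ne (hinj.ne hne.symm)
      rw [smul_eq_C_mul]
      exact ((le_rootMultiplicity_iff (hp i)).1 hlt).mul_left _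
  have hdvd : (X - C r) ^ ((p i₀).rootMultiplicity r + 1) ∣ C (c i₀) * p i₀ := by
    rw [← Finset.add_sum_erase s _ hi₀s, smul_eq_C_mul] at hsum
    exact (dvd_add_left hdvd_rest).1 (hsum ▸ dvd_zero _)
  have hne₀ : C (c i₀) * p i₀ ≠ 0 := mul_ne_zero (C_ne_zero.2 hc₀) (hp i₀)
  have hle := (le_rootMultiplicity_iff hne₀).2 hdvd
  rw [rootMultiplicity_mul hne₀, rootMultiplicity_C] at hle
  omega

lemma rootMultiplicity_nodal [DecidableEq R] {ι : Type*} (s : Finset ι) (v : ι → R) (r : R) :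
    (Lagrange.nodal s v).rootMultiplicity r = {i ∈ s | v i = r}.card := by
  classical
  induction s using Finset.induction_on with
  | empty => simp
  | insert i s hi ih =>
    have hne : (X - C (v i)) * Lagrange.nodal s v ≠ 0 :=
      mul_ne_zero (X_sub_C_ne_zero _) Lagrange.nodal_ne_zero
    rw [Lagrange.nodal_insert_eq_nodal hi, rootMultiplicity_mul hne, rootMultiplicity_X_sub_C, ih,
      Finset.filter_insert]
    split_ifs <;> grind

lemma exists_rootMultiplicity_nodal_Ico_succAbove {v : ℕ → R} (hv : Function.Injective v) (r : R)
    (n : ℕ) :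
    ∃ d : Fin (n + 1), ∀ i : Fin n,
      (Lagrange.nodal (Finset.Ico (d.succAbove i : ℕ) n) v).rootMultiplicity r + d.succAbove i =
        i + 1 := by
  classical
  simp only [rootMultiplicity_nodal]
  by_cases hr : ∃ t < n, v t = r
  · obtain ⟨t, ht, rfl⟩ := hr
    refine ⟨⟨t + 1, by omega⟩, fun i => ?_⟩
    simp only [hv.eq_iff, Finset.filter_eq', Finset.mem_Ico]
    grind [Fin.succAbove]
  · push Not at hr
    refine ⟨0, fun i => ?_⟩
    rw [Finset.filter_false_of_mem fun t ht => hr t (Finset.mem_Ico.1 ht).2]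
    simp

end RootMultiplicity

section Pbar

/-- The weight `(-2)^l (n-1-l)_{k-l}` of `e_l` in `pbar k`, the falling factorial being written
as `∏ (n - t)` over `l < t ≤ k`. -/
noncomputable def pbarWeight (k l : ℕ) : ℚ[X] :=
  (-2) ^ l * Lagrange.nodal (Finset.Ico (l + 1) (k + 1)) (fun t => (t : ℚ))

lemma pbar_eq_weightedCoeffSum (k : ℕ) (μ : Fin k → ℚ) (r : ℚ) (i : Fin k) :
    pbar k μ r i = weightedCoeffSum k (pbarWeight k)
      (∏ m, (X + C (μ m • (X - C r)) - if m = i then 1 else 0)) := by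
  have hC : ∀ m, X + C (μ m • (X - C r)) - (if m = i then 1 else 0) =
      X + C (C (μ m) * (X - C r) - if m = i then 1 else 0) := fun m => by
    rw [smul_eq_C_mul]; split_ifs <;> simp [add_sub_assoc]
  have hVieta := weightedCoeffSum_prod_X_add_C Finset.univ
    (fun m => C (μ m) * (X - C r) - if m = i then 1 else 0) (pbarWeight k)
  rw [Finset.card_fin] at hVieta
  simp only [hC, hVieta, pbar, pbarWeight, Lagrange.nodal_eq, Finset.prod_Ico_eq_prod_range,
    Nat.add_sub_add_right, smul_eq_mul]
  refine Finset.sum_congr rfl fun l _ => ?_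
  rw [mul_comm, add_comm l 1]

lemma pbar_sub_pbar (K : ℕ) (μ : Fin (K + 2) → ℚ) (r : ℚ) {i j : Fin (K + 2)} (hij : i ≠ j) :
    pbar (K + 2) μ r i - pbar (K + 2) μ r j = (μ i - μ j) • weightedCoeffSum K
      (fun l => (X - C r) ^ (l + 1) * pbarWeight (K + 2) (l + 2))
      (Lagrange.nodal ((Finset.univ.erase i).erase j) (-μ)) := by
  set s := (Finset.univ.erase i).erase j with hs
  have hcard : s.card = K := by
    rw [hs, Finset.card_erase_of_mem (Finset.mem_erase.2 ⟨hij.symm, Finset.mem_univ _⟩)]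
    simp
  have hdeg : (∏ m ∈ s, (X + C (μ m • (X - C r)))).natDegree ≤ K := by
    rw [natDegree_prod_of_monic _ _ fun m _ => monic_X_add_C _]
    simp [hcard]
  have hnodal : Lagrange.nodal s (-μ) = ∏ m ∈ s, (X + C (μ m)) := by
    simp [Lagrange.nodal_eq]
  have hhom := weightedCoeffSum_prod_X_add_C_smul s μ (X - C r)
    (fun l => pbarWeight (K + 2) (l + 2))
  rw [hcard, ← hnodal] at hhom
  calc pbar (K + 2) μ r i - pbar (K + 2) μ r j
      = weightedCoeffSum (K + 2) (pbarWeight (K + 2))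
          (((μ i - μ j) • (X - C r)) • ∏ m ∈ s, (X + C (μ m • (X - C r)))) := by
        rw [pbar_eq_weightedCoeffSum, pbar_eq_weightedCoeffSum, ← map_sub,
          prod_sub_ite_sub_prod_sub_ite (Finset.mem_univ i) (Finset.mem_univ j) hij,
          add_sub_add_left_eq_sub, ← map_sub, ← sub_smul, ← smul_eq_C_mul]
    _ = (μ i - μ j) • ((X - C r) * weightedCoeffSum K
          (fun l => (X - C r) ^ l * pbarWeight (K + 2) (l + 2)) (Lagrange.nodal s (-μ))) := by
        rw [map_smul, weightedCoeffSum_add_of_natDegree_le hdeg, hhom, smul_eq_mul, smul_mul_assoc]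
    _ = _ := by
        simp only [mul_weightedCoeffSum, pow_succ', mul_assoc]

lemma pow_mul_pbarWeight_mem_span {K : ℕ} {μ : Fin (K + 2) → ℚ} (hμ : Function.Injective μ) (r : ℚ)
    (i₀ : Fin (K + 2)) {j : ℕ} (hj : j ≤ K) :
    (X - C r) ^ (j + 1) * pbarWeight (K + 2) (j + 2) ∈ Submodule.span ℚ
      ((fun i => pbar (K + 2) μ r i₀ - pbar (K + 2) μ r i) '' {i₀}ᶜ) := by
  have hmem := weight_mem_span_weightedCoeffSum_nodal_erase
    (s := Finset.univ.erase i₀) (neg_injective.comp hμ).injOn (by simp) hj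
    (fun l => (X - C r) ^ (l + 1) * pbarWeight (K + 2) (l + 2))
  refine Submodule.span_le.2 ?_ hmem
  rintro _ ⟨i, hi, rfl⟩
  have hne : i ≠ i₀ := Finset.ne_of_mem_erase hi
  refine (Submodule.smul_mem_iff _ (sub_ne_zero.2 (hμ.ne hne.symm))).1 ?_
  rw [Function.comp_def, ← Pi.neg_def, ← pbar_sub_pbar K μ r hne.symm]
  exact Submodule.subset_span ⟨i, hne, rfl⟩

lemma pbarWeight_add_two (K j : ℕ) :
    pbarWeight (K + 2) (j + 2) =
      (-2) ^ (j + 2) * Lagrange.nodal (Finset.Ico j K) (fun t => ((t + 3 : ℕ) : ℚ)) := by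
  simp only [pbarWeight, Lagrange.nodal_eq]
  rw [Finset.prod_Ico_add' (fun t : ℕ => X - C (t : ℚ)) j K 3]

lemma pbarWeight_ne_zero (k l : ℕ) : pbarWeight k l ≠ 0 :=
  mul_ne_zero (pow_ne_zero _ (by norm_num)) Lagrange.nodal_ne_zero

lemma rootMultiplicity_pow_mul_pbarWeight (r : ℚ) (K j : ℕ) :
    ((X - C r) ^ (j + 1) * pbarWeight (K + 2) (j + 2)).rootMultiplicity r =
      (Lagrange.nodal (Finset.Ico j K) fun t => ((t + 3 : ℕ) : ℚ)).rootMultiplicity r + j + 1 := by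
  have hpow : ((-2 : ℚ[X]) ^ (j + 2)).rootMultiplicity r = 0 :=
    rootMultiplicity_eq_zero (by simp [IsRoot])
  rw [mul_comm, rootMultiplicity_mul_X_sub_C_pow (pbarWeight_ne_zero _ _), pbarWeight_add_two,
    rootMultiplicity_mul (pbarWeight_add_two K j ▸ pbarWeight_ne_zero _ _), hpow, zero_add,
    add_assoc]

lemma exists_linearIndependent_pow_mul_pbarWeight (K : ℕ) (r : ℚ) :
    ∃ d : Fin (K + 1), LinearIndependent ℚ fun i : Fin K =>
      (X - C r) ^ ((d.succAbove i : ℕ) + 1) * pbarWeight (K + 2) (d.succAbove i + 2) := by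
  have hinj : Function.Injective fun t : ℕ => ((t + 3 : ℕ) : ℚ) :=
    Nat.cast_injective.comp (add_left_injective 3)
  obtain ⟨d, hd⟩ := exists_rootMultiplicity_nodal_Ico_succAbove hinj r K
  refine ⟨d, linearIndependent_of_injective_rootMultiplicity (r := r)
    (fun i => mul_ne_zero (pow_ne_zero _ (X_sub_C_ne_zero r)) (pbarWeight_ne_zero _ _)) ?_⟩
  simp only [rootMultiplicity_pow_mul_pbarWeight, hd]
  intro i i' h
  exact Fin.ext (by simpa only [Nat.add_right_cancel_iff] using h)

end Pbar

theorem stmt13_general {k : ℕ} {μ : Fin k → ℚ} (hμ : Function.Injective μ) (r : ℚ) (i₀ : Fin k) :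
    k - 2 ≤ Module.finrank ℚ
      (Submodule.span ℚ ((fun i => pbar k μ r i₀ - pbar k μ r i) '' {i₀}ᶜ)) := by
  rcases k with _ | _ | K
  · simp
  · simp
  · obtain ⟨d, hli⟩ := exists_linearIndependent_pow_mul_pbarWeight K r
    have hfin := FiniteDimensional.span_of_finite ℚ ((Set.toFinite {i₀}ᶜ).image
      fun i => pbar (K + 2) μ r i₀ - pbar (K + 2) μ r i)
    calc K = Module.finrank ℚ (Submodule.span ℚ (Set.range fun i : Fin K =>
            (X - C r) ^ ((d.succAbove i : ℕ) + 1) * pbarWeight (K + 2) (d.succAbove i + 2))) := by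
          rw [finrank_span_eq_card hli, Fintype.card_fin]
      _ ≤ _ := Submodule.finrank_mono <| Submodule.span_le.2 <| Set.range_subset_iff.2 fun i =>
          pow_mul_pbarWeight_mem_span hμ r i₀ (Nat.lt_succ_iff.1 (d.succAbove i).2)

/-- For `k ≥ 2`, pairwise distinct rationals `μ_1,…,μ_k` and an integer `n_0`,
already the `k − 1` difference polynomials `p̄_1 − p̄_i` (for `2 ≤ i ≤ k`) span a
ℚ-linear subspace of `ℚ[n]` of dimension at least `k − 2`. -/
theorem stmt13 (k : ℕ) (hk : 2 ≤ k) (μ : Fin k → ℚ) (hμ : Function.Injective μ)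
    (n0 : ℤ) :
    k - 2 ≤ Module.finrank ℚ
      (Submodule.span ℚ
        ((fun i : Fin k =>
            pbar k μ (n0 : ℚ) ⟨0, by omega⟩ - pbar k μ (n0 : ℚ) i) ''
          {i : Fin k | 1 ≤ (i : ℕ)})) := by
  have hset : {i : Fin k | 1 ≤ (i : ℕ)} = {⟨0, by omega⟩}ᶜ := by
    ext i; simp [Fin.ext_iff, Nat.one_le_iff_ne_zero]
  exact hset ▸ stmt13_general hμ n0 ⟨0, by omega⟩
end

section
/- Let m ≥ 1 and let x_1,…,x_m be pairwise distinct elements of a field of characteristic zero (e.g. ℚ or ℝ). Then the m×m matrix A with entries A_{ℓ,i} = e_{ℓ−1}(x_1,…,x_{i−1},x_{i+1},…,x_m) for 1 ≤ ℓ, i ≤ m is invertible; equivalently, the m vectors R_ℓ = (e_{ℓ−1}(x_1,…,x_{i−1},x_{i+1},…,x_m))_{i=1,…,m}, for 1 ≤ ℓ ≤ m, are linearly independent. -/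
/-!
The numbers `e_l(x_1, …, x̂_i, …, x_m)` are the coefficients of the binary form
`P_i(a, b) = ∏_{t ≠ i} (a x_t + b)` of degree `m - 1`, so multiplying the matrix on the left by the
homogeneous Vandermonde matrix of the points `(a_j, b_j)` evaluates every `P_i` at every point. At
the points `(1, -x_j)` the values with `j ≠ i` vanish, and the product is the diagonal matrix with
entries `∏_{t ≠ i} (x_t - x_i)`, which are units.
-/

open Finset Matrix

theorem prod_mul_add_eq_sum_powersetCard {ι R : Type*} [CommSemiring R] (s : Finset ι)
    (x : ι → R) (a b : R) :
    ∏ t ∈ s, (a * x t + b) =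
      ∑ k ∈ range (#s + 1), a ^ k * b ^ (#s - k) * ∑ S ∈ powersetCard k s, ∏ t ∈ S, x t := by
  classical
  rw [prod_add, sum_powerset]
  refine sum_congr rfl fun k _ => ?_
  rw [mul_sum]
  refine sum_congr rfl fun S hS => ?_
  obtain ⟨hSs, hSk⟩ := mem_powersetCard.mp hS
  rw [prod_mul_distrib, prod_const, prod_const, card_sdiff_of_subset hSs, hSk, mul_right_comm]

/-- The matrix whose `i`-th column lists the elementary symmetric polynomials of degrees
`0, …, m - 1` in the entries of `x` other than `x i`. Rows are indexed from `0`, so row `l` is the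
vector `R_{l+1}`. -/
def esymmEraseMatrix {R : Type*} [CommSemiring R] {m : ℕ} (x : Fin m → R) :
    Matrix (Fin m) (Fin m) R :=
  of fun l i => ∑ S ∈ powersetCard (l : ℕ) (univ.erase i), ∏ t ∈ S, x t

section CommRing

variable {R : Type*} [CommRing R] {m : ℕ}

theorem rectVandermonde_mul_esymmEraseMatrix {α : Type*} (a b : α → R) (x : Fin m → R) :
    rectVandermonde a b m * esymmEraseMatrix x =
      of fun j i => ∏ t ∈ univ.erase i, (a j * x t + b j) := by
  ext j i
  have card_erase : #(univ.erase i) + 1 = m := by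
    rw [card_erase_add_one (mem_univ i), card_fin]
  have rev_eq (l : Fin m) : (l.rev : ℕ) = #(univ.erase i) - l := by
    rw [Fin.val_rev]
    omega
  rw [of_apply, prod_mul_add_eq_sum_powersetCard, card_erase, sum_range]
  simp only [mul_apply, rectVandermonde_apply, esymmEraseMatrix, of_apply, rev_eq]

theorem rectVandermonde_one_neg_mul_esymmEraseMatrix (x : Fin m → R) :
    rectVandermonde 1 (-x) m * esymmEraseMatrix x =
      diagonal fun i => ∏ t ∈ univ.erase i, (x t - x i) := by
  rw [rectVandermonde_mul_esymmEraseMatrix]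
  ext j i
  simp only [of_apply, Pi.one_apply, one_mul, Pi.neg_apply, ← sub_eq_add_neg]
  obtain rfl | hji := eq_or_ne j i
  · rw [diagonal_apply_eq]
  · rw [diagonal_apply_ne _ hji]
    exact prod_eq_zero (mem_erase.mpr ⟨hji, mem_univ j⟩) (sub_self (x j))

theorem stmt14_general (x : Fin m → R) (hx : Pairwise fun i j => IsUnit (x i - x j)) :
    IsUnit (esymmEraseMatrix x) := by
  have isUnit_diagonal_prod : IsUnit (diagonal fun i => ∏ t ∈ univ.erase i, (x t - x i)) :=
    isUnit_diagonal.mpr <| Pi.isUnit_iff.mpr fun i =>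
      IsUnit.prod_iff.mpr fun _ ht => hx (ne_of_mem_erase ht)
  rw [← rectVandermonde_one_neg_mul_esymmEraseMatrix] at isUnit_diagonal_prod
  exact isUnit_of_mul_isUnit_right isUnit_diagonal_prod

end CommRing

/-- For `m ≥ 1` and pairwise distinct elements `x_1,…,x_m` of a field of
characteristic zero, the `m × m` matrix with entries
`A_{ℓ,i} = e_{ℓ−1}(x_1,…,x_{i−1},x_{i+1},…,x_m)` is invertible. -/
theorem stmt14 {F : Type*} [Field F] [CharZero F] (m : ℕ) (hm : 1 ≤ m)
    (x : Fin m → F) (hx : Function.Injective x) :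
    IsUnit (Matrix.of fun l i : Fin m =>
      ∑ S ∈ Finset.powersetCard (l : ℕ) (Finset.univ.erase i), ∏ t ∈ S, x t) := by
  exact stmt14_general x fun _ _ hij => (sub_ne_zero.mpr (hx.ne hij)).isUnit
end
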